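/- arXiv:1102.5255 — 3 statements merged into one kernel-verified Lean document; each statement's English description precedes it below -/
import Mathlib

section
/- Let M = N ≥ 2 and let U₁,…,U_N and Ψ be as in the context (all U_k of block-diagonal form diag(Ũ_k, I_{n−m})), with det W(U₁,…,U_{N−1}) ≠ 0 on an open interval. Let Y_N be the n×n matrix with entries y_{ji} = det W_j(U₁,…,U_{N−1}, U_{i;N}) / det W(U₁,…,U_{N−1}), where U_{i;N} is the i-th column of U_N, and let θ_j = det W_j(U₁,…,U_{N−1}, Ψ) / det W(U₁,…,U_{N−1}). For j ∈ {1,…,n}, let Y_N^j be the (n+1)×(n+1) matrix obtained from Y_N by appending the column (θ₁,…,θₙ)ᵗ on the right and the row (∂y_{j1},…,∂y_{jn}) at the bottom, with corner entry ∂^{(m)}θ_j. Then det Y_N^j = det W_j(U₁,…,U_N, Ψ) / det W(U₁,…,U_{N−1}). -/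
open Matrix

noncomputable section

namespace SingularDarboux

variable {n : ℕ}

/-- Entrywise derivative `∂` of a matrix-valued function. -/
def matD (U : ℝ → Matrix (Fin n) (Fin n) ℝ) : ℝ → Matrix (Fin n) (Fin n) ℝ :=
  fun x => Matrix.of fun i j => deriv (fun t => U t i j) x

/-- The operator `D_m` acting on matrix-valued functions: it differentiates the
first `m` rows and keeps the remaining rows unchanged. -/
def matDm (m : ℕ) (U : ℝ → Matrix (Fin n) (Fin n) ℝ) : ℝ → Matrix (Fin n) (Fin n) ℝ :=
  fun x => Matrix.of fun i j => if (i : ℕ) < m then deriv (fun t => U t i j) x else U x i j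

/-- Entrywise derivative `∂` of a vector-valued function. -/
def vecD (Ψ : ℝ → Fin n → ℝ) : ℝ → Fin n → ℝ := fun x i => deriv (fun t => Ψ t i) x

/-- The operator `D_m` (equivalently `∂^{(m)}`) acting on vector-valued functions:
it differentiates the first `m` components and keeps the remaining ones unchanged. -/
def vecDm (m : ℕ) (Ψ : ℝ → Fin n → ℝ) : ℝ → Fin n → ℝ :=
  fun x i => if (i : ℕ) < m then deriv (fun t => Ψ t i) x else Ψ x i

/-- All entries of the matrix-valued function are smooth. -/
def SmoothMat (U : ℝ → Matrix (Fin n) (Fin n) ℝ) : Prop :=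
  ∀ i j, ContDiff ℝ (⊤ : ℕ∞) fun x => U x i j

/-- All components of the vector-valued function are smooth. -/
def SmoothVec (Ψ : ℝ → Fin n → ℝ) : Prop := ∀ i, ContDiff ℝ (⊤ : ℕ∞) fun x => Ψ x i

/-- `U = diag(Ũ, I_{n-m})`: outside of the top-left `m × m` block, `U` coincides with
the identity matrix. -/
def BlockDiag (m : ℕ) (U : ℝ → Matrix (Fin n) (Fin n) ℝ) : Prop :=
  ∀ (x : ℝ) (i j : Fin n), (m ≤ (i : ℕ) ∨ m ≤ (j : ℕ)) → U x i j = if i = j then 1 else 0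

/-- The `(r,k)` block (`r,k` $0$-indexed) of the matrix `W(U₁,…,U_M;U_{M+1},…,U_N)`. -/
def Wblock (m M r k : ℕ) (U : ℝ → Matrix (Fin n) (Fin n) ℝ) : ℝ → Matrix (Fin n) (Fin n) ℝ :=
  if k < M then (if r ≤ k then (matDm m)^[r] U else matD^[r] U)
  else (if r < M then (matDm m)^[r] U else matD^[r - M] ((matDm m)^[M] U))

/-- The `r`-th block of the column appended on the right in `W_j`. -/
def Wcol (m M r : ℕ) (Ψ : ℝ → Fin n → ℝ) : ℝ → Fin n → ℝ :=
  if r < M then (vecDm m)^[r] Ψ else vecD^[r - M] ((vecDm m)^[M] Ψ)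

/-- The `i`-th row of the `k`-th block of the row appended at the bottom in `W_j`
(also the replacement row used in `W_{i,j}`). -/
def Wrow (m M N k : ℕ) (U : ℝ → Matrix (Fin n) (Fin n) ℝ) (i : Fin n) : ℝ → Fin n → ℝ :=
  if k < M then (fun x => matD^[N] U x i) else (fun x => matD^[N - M] ((matDm m)^[M] U) x i)

/-- The `nN × nN` matrix `W(U₁,…,U_M;U_{M+1},…,U_N)`; rows are indexed by pairs
(block-row `r`, row `i` within the block) and similarly for columns. -/
def Wmat (m M N : ℕ) (U : ℕ → ℝ → Matrix (Fin n) (Fin n) ℝ) (x : ℝ) :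
    Matrix (Fin N × Fin n) (Fin N × Fin n) ℝ :=
  Matrix.of fun p q => Wblock m M (p.1 : ℕ) (q.1 : ℕ) (U (q.1 : ℕ)) x p.2 q.2

/-- The `(nN+1) × (nN+1)` matrix `W_j(U₁,…,U_M;U_{M+1},…,U_N,Ψ)`. -/
def WjMat (m M N : ℕ) (j : Fin n) (U : ℕ → ℝ → Matrix (Fin n) (Fin n) ℝ)
    (Ψ : ℝ → Fin n → ℝ) (x : ℝ) :
    Matrix ((Fin N × Fin n) ⊕ Unit) ((Fin N × Fin n) ⊕ Unit) ℝ :=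
  Matrix.of fun p q =>
    match p, q with
    | Sum.inl p, Sum.inl q => Wblock m M (p.1 : ℕ) (q.1 : ℕ) (U (q.1 : ℕ)) x p.2 q.2
    | Sum.inl p, Sum.inr _ => Wcol m M (p.1 : ℕ) Ψ x p.2
    | Sum.inr _, Sum.inl q => Wrow m M N (q.1 : ℕ) (U (q.1 : ℕ)) j x q.2
    | Sum.inr _, Sum.inr _ => vecD^[N - M] ((vecDm m)^[M] Ψ) x j

/-- The `nN × nN` matrix `W_{i,j}(U₁,…,U_M;U_{M+1},…,U_N)`: in the last block-row
(`r = N-1`) of `W` the `j`-th row of each block is replaced as prescribed. -/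
def WijMat (m M N : ℕ) (i j : Fin n) (U : ℕ → ℝ → Matrix (Fin n) (Fin n) ℝ) (x : ℝ) :
    Matrix (Fin N × Fin n) (Fin N × Fin n) ℝ :=
  Matrix.of fun p q =>
    if (p.1 : ℕ) = N - 1 ∧ p.2 = j then Wrow m M N (q.1 : ℕ) (U (q.1 : ℕ)) i x q.2
    else Wblock m M (p.1 : ℕ) (q.1 : ℕ) (U (q.1 : ℕ)) x p.2 q.2

/-!
Dividing by `det W(U₁, …, U_K)`, where `K = N - 1`, is taking a Schur complement. It turns
`det W_j(U₁, …, U_K, c)` into the `j`-th component of the Darboux transform `D_m^K c - ⋯`, whose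
correction is the combination of lower-order terms that makes it annihilate the first `m` columns
of `U₁, …, U_K`. It turns `det W_j(U₁, …, U_N, Ψ)` into the determinant of `Y_N^j` with a different
last row, built from the operator `D_m^{K+1} c - ⋯` corrected in the same way.

That operator differs from `∂^{(m)}` of the Darboux transform by a combination of the components
of the Darboux transform, that is, by a row operation: choose the combination that matches the
terms in `D_m^K c`; what remains is a functional of the first `m` components of
`c, D_m c, …, D_m^{K-1} c` that annihilates the first `m` columns of `U₁, …, U_K`, and it vanishes
because `W(U₁, …, U_K)` is invertible.
-/

section LinearAlgebra

variable {R ι κ : Type*}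

/-- The matrix `A` bordered by the column `u` on the right and the row `v` at the bottom, with
corner entry `d`; the border has index `Sum.inr ()`. -/
def bordered (A : Matrix ι κ R) (u : ι → R) (v : κ → R) (d : R) :
    Matrix (ι ⊕ Unit) (κ ⊕ Unit) R :=
  fromBlocks A (replicateCol Unit u) (replicateRow Unit v) (of fun _ _ => d)

lemma det_fromBlocks_div_det [Field R] [Fintype ι] [DecidableEq ι] [Fintype κ] [DecidableEq κ]
    {A : Matrix ι ι R} (hA : A.det ≠ 0) (B : Matrix ι κ R) (C : Matrix κ ι R)
    (D : Matrix κ κ R) :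
    (fromBlocks A B C D).det / A.det = (D - C * A⁻¹ * B).det := by
  have := A.invertibleOfIsUnitDet hA.isUnit
  rw [det_fromBlocks₁₁, invOf_eq_nonsing_inv, mul_div_cancel_left₀ _ hA]

lemma det_bordered_add_vecMul [CommRing R] [Fintype ι] [DecidableEq ι]
    (A : Matrix ι ι R) (u v w : ι → R) (d : R) :
    (bordered A u (v + w ᵥ* A) (d + w ⬝ᵥ u)).det = (bordered A u v d).det := by
  have factor : bordered A u (v + w ᵥ* A) (d + w ⬝ᵥ u) =
      fromBlocks 1 0 (replicateRow Unit w) 1 * bordered A u v d := by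
    simp only [bordered, fromBlocks_multiply, one_mul, ← replicateRow_vecMul]
    congr 1 <;> ext <;> simp [add_comm, dotProduct, vecMul]
  rw [factor, det_mul, det_fromBlocks_zero₁₂, det_one, det_one, one_mul, one_mul]

/-- The block vector `(w₀, …, w_L)` moved one block to the right, with `w_L` dropped and a zero
block in front. Summation by parts moves the differentiation of a jet onto it. -/
def blockShift [Zero R] {L : ℕ} (w : Fin (L + 1) × ι → R) : Fin (L + 1) × ι → R :=
  fun p => Fin.cases (motive := fun _ => R) 0 (fun s => w (s.castSucc, p.2)) p.1

lemma sum_mul_succ_eq_add_blockShift [NonUnitalNonAssocSemiring R] [Fintype ι] {L : ℕ}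
    (w : Fin (L + 1) × ι → R) (f : ℕ → ι → R) :
    ∑ p, w p * f (p.1 + 1) p.2 =
      ∑ i, w (Fin.last L, i) * f (L + 1) i + ∑ p, blockShift w p * f p.1 p.2 := by
  simp only [Fintype.sum_prod_type, blockShift]
  rw [Fin.sum_univ_castSucc, Fin.sum_univ_succ (n := L), add_comm]
  simp

/-- Splits off the last block row and the border from the index set of `WjMat`. -/
def lastBlockEquiv (K : ℕ) (ι : Type*) :
    (Fin K × ι) ⊕ (ι ⊕ Unit) ≃ (Fin (K + 1) × ι) ⊕ Unit where
  toFun := Sum.elim (fun p => .inl (p.1.castSucc, p.2))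
    (Sum.elim (fun i => .inl (Fin.last K, i)) .inr)
  invFun := Sum.elim
    (fun p => Fin.lastCases (.inr (.inl p.2)) (fun k => .inl (k, p.2)) p.1) (.inr ∘ .inr)
  left_inv := by rintro (p | i | u) <;> simp
  right_inv := by
    rintro (⟨k, i⟩ | u)
    · induction k using Fin.lastCases <;> simp
    · simp

end LinearAlgebra

section Differentiability

variable {𝕜 E ι : Type*} [NontriviallyNormedField 𝕜] [NormedAddCommGroup E] [NormedSpace 𝕜 E]
  [Fintype ι] [DecidableEq ι] {A : E → Matrix ι ι 𝕜} {x : E}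

lemma differentiableAt_det (hA : ∀ p q, DifferentiableAt 𝕜 (fun t => A t p q) x) :
    DifferentiableAt 𝕜 (fun t => (A t).det) x := by
  simp only [det_apply']
  fun_prop

lemma differentiableAt_nonsing_inv (hA : ∀ p q, DifferentiableAt 𝕜 (fun t => A t p q) x)
    (hx : (A x).det ≠ 0) (p q : ι) : DifferentiableAt 𝕜 (fun t => (A t)⁻¹ p q) x := by
  simp only [inv_def, Matrix.smul_apply, smul_eq_mul, Ring.inverse_eq_inv', adjugate_apply]
  refine ((differentiableAt_det hA).inv hx).mul (differentiableAt_det fun i j => ?_)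
  by_cases hi : i = q
  · simp [hi]
  · simpa [hi] using hA i j

end Differentiability

section Iterates

variable {m r : ℕ} {V : ℝ → Matrix (Fin n) (Fin n) ℝ} {c : ℝ → Fin n → ℝ}

lemma matD_iterate_apply (r : ℕ) (V : ℝ → Matrix (Fin n) (Fin n) ℝ) (x : ℝ) (i l : Fin n) :
    matD^[r] V x i l = iteratedDeriv r (fun t => V t i l) x := by
  induction r generalizing x with
  | zero => simp
  | succ r ih =>
    rw [Function.iterate_succ_apply', iteratedDeriv_succ]
    exact congrArg (deriv · x) (funext ih)

lemma matDm_iterate_apply (m r : ℕ) (V : ℝ → Matrix (Fin n) (Fin n) ℝ) (x : ℝ) (i l : Fin n) :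
    (matDm m)^[r] V x i l = (vecDm m)^[r] (fun t i => V t i l) x i := by
  have commute : Function.Semiconj (fun V t i => V t i l) (matDm (n := n) m) (vecDm m) :=
    fun _ => rfl
  exact congrFun (congrFun (commute.iterate_right r V) x) i

lemma vecDm_iterate_succ_apply_of_lt {i : Fin n} (hi : (i : ℕ) < m) (r : ℕ)
    (c : ℝ → Fin n → ℝ) (x : ℝ) :
    (vecDm m)^[r + 1] c x i = deriv (fun t => (vecDm m)^[r] c t i) x := by
  rw [Function.iterate_succ_apply', vecDm, if_pos hi]

lemma vecDm_iterate_apply_of_lt {i : Fin n} (hi : (i : ℕ) < m) (r : ℕ) (c : ℝ → Fin n → ℝ)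
    (x : ℝ) : (vecDm m)^[r] c x i = iteratedDeriv r (fun t => c t i) x := by
  induction r generalizing x with
  | zero => simp
  | succ r ih =>
    rw [vecDm_iterate_succ_apply_of_lt hi, iteratedDeriv_succ]
    exact congrArg (deriv · x) (funext ih)

lemma matD_iterate_apply_of_lt {i : Fin n} (hi : (i : ℕ) < m) (r : ℕ)
    (V : ℝ → Matrix (Fin n) (Fin n) ℝ) (x : ℝ) (l : Fin n) :
    matD^[r] V x i l = (vecDm m)^[r] (fun t i => V t i l) x i := by
  rw [matD_iterate_apply, vecDm_iterate_apply_of_lt hi]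

lemma vecDm_iterate_apply_of_le {i : Fin n} (hi : m ≤ (i : ℕ)) (r : ℕ) (c : ℝ → Fin n → ℝ)
    (x : ℝ) : (vecDm m)^[r] c x i = c x i := by
  induction r with
  | zero => rfl
  | succ r ih => rw [Function.iterate_succ_apply', vecDm, if_neg hi.not_gt, ih]

lemma SmoothVec.vecDm_iterate (hc : SmoothVec c) (m r : ℕ) : SmoothVec ((vecDm m)^[r] c) := by
  refine Function.Iterate.rec SmoothVec hc (fun f hf i => ?_) r
  by_cases hi : (i : ℕ) < m
  · simp only [vecDm, if_pos hi]
    exact (hf i).iterate_deriv 1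
  · simpa only [vecDm, if_neg hi] using hf i

lemma SmoothMat.matD_iterate (hV : SmoothMat V) (r : ℕ) : SmoothMat (matD^[r] V) :=
  Function.Iterate.rec SmoothMat hV (fun _ hf i l => (hf i l).iterate_deriv 1) r

lemma SmoothMat.col (hV : SmoothMat V) (l : Fin n) : SmoothVec fun t i => V t i l :=
  fun i => hV i l

lemma SmoothMat.matDm_iterate (hV : SmoothMat V) (m r : ℕ) : SmoothMat ((matDm m)^[r] V) := by
  intro i l
  simpa only [matDm_iterate_apply] using (hV.col l).vecDm_iterate m r i

lemma BlockDiag.matD_iterate_apply (hV : BlockDiag m V) {i l : Fin n}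
    (h : m ≤ (i : ℕ) ∨ m ≤ (l : ℕ)) (r : ℕ) (x : ℝ) :
    matD^[r] V x i l = if r = 0 then (if i = l then 1 else 0) else 0 := by
  simp only [SingularDarboux.matD_iterate_apply, hV _ i l h, iteratedDeriv_const]

lemma BlockDiag.matD_iterate_col (hV : BlockDiag m V) {l : Fin n} (hl : (l : ℕ) < m) (r : ℕ)
    (x : ℝ) (i : Fin n) : matD^[r] V x i l = (vecDm m)^[r] (fun t i => V t i l) x i := by
  by_cases hi : (i : ℕ) < m
  · exact matD_iterate_apply_of_lt hi ..
  · have hil : i ≠ l := fun h => hi (h ▸ hl)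
    have hi := not_lt.1 hi
    simp [vecDm_iterate_apply_of_le hi, hV.matD_iterate_apply (.inl hi), hV x i l (.inl hi), hil]

end Iterates

section Jets

variable {m K r : ℕ} {U : ℕ → ℝ → Matrix (Fin n) (Fin n) ℝ} {c : ℝ → Fin n → ℝ} {x : ℝ}

/-- The `D_m`-jet `(c, D_m c, …, D_m^{K-1} c)` of a vector-valued function, the column that `W_j`
appends to `W` when all its blocks are block-diagonal. -/
def jet (m K : ℕ) (c : ℝ → Fin n → ℝ) (x : ℝ) : Fin K × Fin n → ℝ :=
  fun p => (vecDm m)^[p.1] c x p.2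

/-- The block row `(∂^r U₁, …, ∂^r U_K)`. -/
def derivRow (K r : ℕ) (U : ℕ → ℝ → Matrix (Fin n) (Fin n) ℝ) (x : ℝ) :
    Matrix (Fin n) (Fin K × Fin n) ℝ :=
  of fun j q => matD^[r] (U q.1) x j q.2

/-- The coefficients expressing the rows of `(∂^r U₁, …, ∂^r U_K)` through those of
`W(U₁, …, U_K)`. -/
def jetCoeff (m K r : ℕ) (U : ℕ → ℝ → Matrix (Fin n) (Fin n) ℝ) (x : ℝ) :
    Matrix (Fin n) (Fin K × Fin n) ℝ :=
  derivRow K r U x * (Wmat m K K U x)⁻¹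

/-- The operator `D_m^r` corrected by a combination of lower-order terms so that it annihilates
the first `m` columns of `U₁, …, U_K`. For `r = K` this is the Darboux transformation. -/
def darboux (m K r : ℕ) (U : ℕ → ℝ → Matrix (Fin n) (Fin n) ℝ) (c : ℝ → Fin n → ℝ) :
    ℝ → Fin n → ℝ :=
  fun x => (vecDm m)^[r] c x - jetCoeff m K r U x *ᵥ jet m K c x

lemma Wmat_apply_of_row_lt {p : Fin K × Fin n} (hp : (p.2 : ℕ) < m) (q : Fin K × Fin n) :
    Wmat m K K U x p q = matD^[p.1] (U q.1) x p.2 q.2 := by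
  rw [Wmat, of_apply, Wblock, if_pos q.1.2]
  split_ifs
  · rw [matDm_iterate_apply, matD_iterate_apply_of_lt hp]
  · rfl

lemma Wmat_apply_of_col_lt (hU : ∀ k < K, BlockDiag m (U k)) {q : Fin K × Fin n}
    (hq : (q.2 : ℕ) < m) (p : Fin K × Fin n) :
    Wmat m K K U x p q = jet m K (fun t i => U q.1 t i q.2) x p := by
  rw [Wmat, of_apply, Wblock, if_pos q.1.2]
  split_ifs
  · exact matDm_iterate_apply ..
  · exact (hU _ q.1.2).matD_iterate_col hq ..

lemma Wmat_blockTriangular (hU : ∀ k < K, BlockDiag m (U k)) :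
    (Wmat m K K U x).BlockTriangular fun p => decide ((p.2 : ℕ) < m) := by
  intro p q hqp
  obtain ⟨hq, hp⟩ : m ≤ (q.2 : ℕ) ∧ (p.2 : ℕ) < m := by simpa [Bool.lt_iff] using hqp
  have hpq : p.2 ≠ q.2 := fun h => absurd hp (h ▸ hq.not_gt)
  rw [Wmat_apply_of_row_lt hp, (hU _ q.1.2).matD_iterate_apply (.inr hq), if_neg hpq, ite_self]

lemma derivRow_apply_eq_zero (hU : ∀ k < K, BlockDiag m (U k)) (hr : r ≠ 0) {j : Fin n}
    {q : Fin K × Fin n} (h : m ≤ (j : ℕ) ∨ m ≤ (q.2 : ℕ)) : derivRow K r U x j q = 0 := by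
  rw [derivRow, of_apply, (hU _ q.1.2).matD_iterate_apply h, if_neg hr]

lemma jetCoeff_apply_eq_zero (hU : ∀ k < K, BlockDiag m (U k)) (hr : r ≠ 0)
    (hx : (Wmat m K K U x).det ≠ 0) {j : Fin n} {p : Fin K × Fin n}
    (h : m ≤ (j : ℕ) ∨ m ≤ (p.2 : ℕ)) : jetCoeff m K r U x j p = 0 := by
  have := (Wmat m K K U x).invertibleOfIsUnitDet hx.isUnit
  refine Finset.sum_eq_zero fun q _ => mul_eq_zero.2 ?_
  by_cases hq : m ≤ (j : ℕ) ∨ m ≤ (q.2 : ℕ)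
  · exact .inl (derivRow_apply_eq_zero hU hr hq)
  · right
    apply blockTriangular_inv_of_blockTriangular (Wmat_blockTriangular hU)
    simp only [Bool.lt_iff, decide_eq_false_iff_not, decide_eq_true_eq]
    omega

lemma differentiableAt_jetCoeff (hU : ∀ k < K, SmoothMat (U k)) (hx : (Wmat m K K U x).det ≠ 0)
    (j : Fin n) (p : Fin K × Fin n) : DifferentiableAt ℝ (fun t => jetCoeff m K r U t j p) x := by
  have hW (p q : Fin K × Fin n) : DifferentiableAt ℝ (fun t => Wmat m K K U t p q) x := by
    simp only [Wmat, of_apply, Wblock, if_pos q.1.2]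
    split_ifs
    · exact ((hU _ q.1.2).matDm_iterate m _ _ _).differentiable (by simp) x
    · exact ((hU _ q.1.2).matD_iterate _ _ _).differentiable (by simp) x
  simp only [jetCoeff, mul_apply]
  refine .fun_sum fun q _ => .mul ?_ (differentiableAt_nonsing_inv hW hx q p)
  exact ((hU _ q.1.2).matD_iterate r j q.2).differentiable (by simp) x

lemma deriv_jetCoeff_apply_eq_zero (hblk : ∀ k < K, BlockDiag m (U k)) (hr : r ≠ 0)
    (hdet : ∀ᶠ t in nhds x, (Wmat m K K U t).det ≠ 0) {j : Fin n} {p : Fin K × Fin n}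
    (hp : m ≤ (p.2 : ℕ)) : deriv (fun t => jetCoeff m K r U t j p) x = 0 := by
  have hzero : (fun t => jetCoeff m K r U t j p) =ᶠ[nhds x] fun _ => 0 :=
    hdet.mono fun t ht => jetCoeff_apply_eq_zero hblk hr ht (.inr hp)
  rw [hzero.deriv_eq, deriv_const]

lemma darboux_apply_of_le (hblk : ∀ k < K, BlockDiag m (U k)) (hr : r ≠ 0)
    (hx : (Wmat m K K U x).det ≠ 0) {j : Fin n} (hj : m ≤ (j : ℕ)) :
    darboux m K r U c x j = c x j := by
  have hcoeff : jetCoeff m K r U x j = 0 :=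
    funext fun _ => jetCoeff_apply_eq_zero hblk hr hx (.inl hj)
  rw [darboux, Pi.sub_apply, mulVec, hcoeff, zero_dotProduct, sub_zero,
    vecDm_iterate_apply_of_le hj]

lemma darboux_col_eq_zero (hU : ∀ k < K, BlockDiag m (U k)) (hx : (Wmat m K K U x).det ≠ 0)
    {q : Fin K × Fin n} (hq : (q.2 : ℕ) < m) :
    darboux m K r U (fun t i => U q.1 t i q.2) x = 0 := by
  have hmul : jetCoeff m K r U x * Wmat m K K U x = derivRow K r U x := by
    rw [jetCoeff, Matrix.mul_assoc, nonsing_inv_mul _ hx.isUnit, Matrix.mul_one]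
  funext j
  rw [darboux, Pi.sub_apply, Pi.zero_apply, ← (hU _ q.1.2).matD_iterate_col hq, sub_eq_zero]
  calc matD^[r] (U q.1) x j q.2 = (jetCoeff m K r U x * Wmat m K K U x) j q := by rw [hmul]; rfl
    _ = (jetCoeff m K r U x *ᵥ jet m K (fun t i => U q.1 t i q.2) x) j := by
      simp only [mul_apply, mulVec, dotProduct, Wmat_apply_of_col_lt hU hq]

lemma eq_zero_of_dotProduct_jet_col_eq_zero (hU : ∀ k < K, BlockDiag m (U k))
    (hx : (Wmat m K K U x).det ≠ 0) {w : Fin K × Fin n → ℝ}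
    (hw : ∀ p, m ≤ (p.2 : ℕ) → w p = 0)
    (h : ∀ q : Fin K × Fin n, (q.2 : ℕ) < m → w ⬝ᵥ jet m K (fun t i => U q.1 t i q.2) x = 0) :
    w = 0 := by
  refine eq_zero_of_vecMul_eq_zero hx (funext fun q => ?_)
  by_cases hq : (q.2 : ℕ) < m
  · simpa only [vecMul, dotProduct, Wmat_apply_of_col_lt hU hq, Pi.zero_apply] using h q hq
  · refine Finset.sum_eq_zero fun p _ => mul_eq_zero.2 ?_
    by_cases hp : (p.2 : ℕ) < m
    · exact .inr (Wmat_blockTriangular hU (by simp [Bool.lt_iff, hp, hq]))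
    · exact .inl (hw p (not_lt.1 hp))

lemma deriv_darboux_apply (hU : ∀ k < K, SmoothMat (U k)) (hblk : ∀ k < K, BlockDiag m (U k))
    (hr : r ≠ 0) (hx : (Wmat m K K U x).det ≠ 0) (hc : SmoothVec c) {j : Fin n}
    (hj : (j : ℕ) < m) :
    deriv (fun t => darboux m K r U c t j) x = (vecDm m)^[r + 1] c x j -
      ((fun p => deriv (fun t => jetCoeff m K r U t j p) x) ⬝ᵥ jet m K c x +
        ∑ p, jetCoeff m K r U x j p * (vecDm m)^[p.1 + 1] c x p.2) := by
  have hvec (s : ℕ) (i : Fin n) : DifferentiableAt ℝ (fun t => (vecDm m)^[s] c t i) x :=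
    (hc.vecDm_iterate m s i).differentiable (by simp) x
  have hcoeff (p : Fin K × Fin n) := differentiableAt_jetCoeff (m := m) (r := r) hU hx j p
  have hterm (p : Fin K × Fin n) :
      deriv (fun t => jetCoeff m K r U t j p * jet m K c t p) x =
        deriv (fun t => jetCoeff m K r U t j p) x * jet m K c x p +
          jetCoeff m K r U x j p * (vecDm m)^[p.1 + 1] c x p.2 := by
    simp only [jet]
    rw [deriv_fun_mul (hcoeff p) (hvec p.1 p.2)]
    by_cases hp : (p.2 : ℕ) < m
    · rw [vecDm_iterate_succ_apply_of_lt hp]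
    · rw [jetCoeff_apply_eq_zero hblk hr hx (.inr (not_lt.1 hp)), zero_mul, zero_mul]
  have hprod (p : Fin K × Fin n) :
      DifferentiableAt ℝ (fun t => jetCoeff m K r U t j p * jet m K c t p) x :=
    (hcoeff p).mul (hvec p.1 p.2)
  simp only [darboux, Pi.sub_apply, mulVec, dotProduct]
  rw [deriv_fun_sub (hvec r j) (.fun_sum fun p _ => hprod p), deriv_fun_sum fun p _ => hprod p,
    vecDm_iterate_succ_apply_of_lt hj]
  simp only [hterm, Finset.sum_add_distrib]

end Jets

section Recursion

variable {m L r : ℕ} {U : ℕ → ℝ → Matrix (Fin n) (Fin n) ℝ} {c : ℝ → Fin n → ℝ} {x : ℝ}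

/-- The coefficients of the highest derivative `D_m^L c` in the correction term of `darboux`. -/
def leadCoeff (m L r : ℕ) (U : ℕ → ℝ → Matrix (Fin n) (Fin n) ℝ) (x : ℝ) :
    Matrix (Fin n) (Fin n) ℝ :=
  (jetCoeff m (L + 1) r U x).submatrix id (Prod.mk (Fin.last L))

lemma leadCoeff_row_eq_zero (hblk : ∀ k < L + 1, BlockDiag m (U k)) (hr : r ≠ 0)
    (hx : (Wmat m (L + 1) (L + 1) U x).det ≠ 0) {j : Fin n} (hj : m ≤ (j : ℕ)) :
    leadCoeff m L r U x j = 0 :=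
  funext fun _ => jetCoeff_apply_eq_zero hblk hr hx (.inl hj)

lemma exists_darboux_succ_sub_eq_dotProduct_jet (hU : ∀ k < L + 1, SmoothMat (U k))
    (hblk : ∀ k < L + 1, BlockDiag m (U k)) (hr : r ≠ 0)
    (hdet : ∀ᶠ t in nhds x, (Wmat m (L + 1) (L + 1) U t).det ≠ 0) {j : Fin n}
    (hj : (j : ℕ) < m) :
    ∃ w : Fin (L + 1) × Fin n → ℝ, (∀ p, m ≤ (p.2 : ℕ) → w p = 0) ∧
      ∀ c, SmoothVec c → darboux m (L + 1) (r + 1) U c x j =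
        deriv (fun t => darboux m (L + 1) r U c t j) x +
          (leadCoeff m L r U x *ᵥ darboux m (L + 1) (L + 1) U c x) j +
          w ⬝ᵥ jet m (L + 1) c x := by
  have hx := hdet.self_of_nhds
  refine ⟨(fun p => deriv (fun t => jetCoeff m (L + 1) r U t j p) x)
    + blockShift (jetCoeff m (L + 1) r U x j)
    + (leadCoeff m L r U x * jetCoeff m (L + 1) (L + 1) U x) j
    - jetCoeff m (L + 1) (r + 1) U x j, fun p hp => ?_, fun c hc => ?_⟩
  · have hshift : blockShift (jetCoeff m (L + 1) r U x j) p = 0 := by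
      obtain ⟨s, i⟩ := p
      cases s using Fin.cases with
      | zero => rfl
      | succ s => exact jetCoeff_apply_eq_zero hblk hr hx (.inr hp)
    have hlead : (leadCoeff m L r U x * jetCoeff m (L + 1) (L + 1) U x) j p = 0 := by
      rw [mul_apply]
      exact Finset.sum_eq_zero fun i _ =>
        mul_eq_zero_of_right _ (jetCoeff_apply_eq_zero hblk L.succ_ne_zero hx (.inr hp))
    simp only [Pi.sub_apply, Pi.add_apply, deriv_jetCoeff_apply_eq_zero hblk hr hdet hp, hshift,
      hlead, jetCoeff_apply_eq_zero hblk r.succ_ne_zero hx (.inr hp), add_zero, sub_zero]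
  · have hsum : ∑ p, jetCoeff m (L + 1) r U x j p * (vecDm m)^[p.1 + 1] c x p.2 =
        leadCoeff m L r U x j ⬝ᵥ (vecDm m)^[L + 1] c x +
          blockShift (jetCoeff m (L + 1) r U x j) ⬝ᵥ jet m (L + 1) c x :=
      sum_mul_succ_eq_add_blockShift _ fun s i => (vecDm m)^[s] c x i
    rw [deriv_darboux_apply hU hblk hr hx hc hj, hsum]
    simp only [darboux, mulVec_sub, mulVec_mulVec, Pi.sub_apply, sub_dotProduct, add_dotProduct]
    simp only [mulVec]
    ring

theorem darboux_succ (hU : ∀ k < L + 1, SmoothMat (U k)) (hblk : ∀ k < L + 1, BlockDiag m (U k))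
    (hr : r ≠ 0) (hdet : ∀ᶠ t in nhds x, (Wmat m (L + 1) (L + 1) U t).det ≠ 0)
    (hc : SmoothVec c) :
    darboux m (L + 1) (r + 1) U c x = vecDm m (darboux m (L + 1) r U c) x +
      leadCoeff m L r U x *ᵥ darboux m (L + 1) (L + 1) U c x := by
  have hx := hdet.self_of_nhds
  funext j
  rw [Pi.add_apply, vecDm]
  by_cases hj : (j : ℕ) < m
  · obtain ⟨w, hw, hdiff⟩ := exists_darboux_succ_sub_eq_dotProduct_jet hU hblk hr hdet hj
    have hw0 : w = 0 := by
      refine eq_zero_of_dotProduct_jet_col_eq_zero hblk hx hw fun q hq => ?_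
      have hcol (s : ℕ) : ∀ᶠ t in nhds x,
          darboux m (L + 1) s U (fun t i => U q.1 t i q.2) t = 0 :=
        hdet.mono fun t ht => darboux_col_eq_zero hblk ht hq
      have hderiv :
          deriv (fun t => darboux m (L + 1) r U (fun t i => U q.1 t i q.2) t j) x = 0 := by
        have hzero : (fun t => darboux m (L + 1) r U (fun t i => U q.1 t i q.2) t j)
            =ᶠ[nhds x] fun _ => 0 := (hcol r).mono fun t ht => congrFun ht j
        rw [hzero.deriv_eq, deriv_const]
      have hdot := hdiff _ ((hU _ q.1.2).col q.2)
      rw [hderiv, (hcol _).self_of_nhds, (hcol _).self_of_nhds, mulVec_zero] at hdot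
      simpa using hdot.symm
    rw [if_pos hj, hdiff c hc, hw0, zero_dotProduct, add_zero]
  · rw [if_neg hj, darboux_apply_of_le hblk r.succ_ne_zero hx (not_lt.1 hj),
      darboux_apply_of_le hblk hr hx (not_lt.1 hj), mulVec,
      leadCoeff_row_eq_zero hblk hr hx (not_lt.1 hj), zero_dotProduct, add_zero]

end Recursion

section Determinants

variable {m K : ℕ} {U : ℕ → ℝ → Matrix (Fin n) (Fin n) ℝ} {x : ℝ}

/-- The Darboux transformation built from `U₁, …, U_K`, applied to the columns of `V`; for
`V = U_{K+1}` this is the matrix `Y_{K+1}`. -/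
def darbouxMat (m K : ℕ) (U : ℕ → ℝ → Matrix (Fin n) (Fin n) ℝ)
    (V : ℝ → Matrix (Fin n) (Fin n) ℝ) (x : ℝ) : Matrix (Fin n) (Fin n) ℝ :=
  of fun j i => darboux m K K U (fun t l => V t l i) x j

lemma WjMat_eq_bordered (m K : ℕ) (j : Fin n) (U : ℕ → ℝ → Matrix (Fin n) (Fin n) ℝ)
    (c : ℝ → Fin n → ℝ) (x : ℝ) :
    WjMat m K K j U c x = bordered (Wmat m K K U x) (jet m K c x) (derivRow K K U x j)
      ((vecDm m)^[K] c x j) := by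
  ext (p | p) (q | q)
  · rfl
  · exact congrFun (congrFun (if_pos p.1.2) x) p.2
  · exact congrFun (congrFun (if_pos q.1.2) x) q.2
  · simp [WjMat, bordered]

lemma det_WjMat_div_det (hx : (Wmat m K K U x).det ≠ 0) (c : ℝ → Fin n → ℝ) (j : Fin n) :
    (WjMat m K K j U c x).det / (Wmat m K K U x).det = darboux m K K U c x j := by
  rw [WjMat_eq_bordered, bordered, det_fromBlocks_div_det hx, det_unique]
  rfl

lemma WjMat_succ_submatrix (m K : ℕ) (j : Fin n) (U : ℕ → ℝ → Matrix (Fin n) (Fin n) ℝ)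
    (c : ℝ → Fin n → ℝ) (x : ℝ) :
    (WjMat m (K + 1) (K + 1) j U c x).submatrix (lastBlockEquiv K (Fin n))
        (lastBlockEquiv K (Fin n)) =
      fromBlocks (Wmat m K K U x)
        (fromCols (of fun p l => jet m K (fun t i => U K t i l) x p)
          (replicateCol Unit (jet m K c x)))
        (fromRows (derivRow K K U x) (replicateRow Unit (derivRow K (K + 1) U x j)))
        (bordered (of fun i l => (vecDm m)^[K] (fun t i => U K t i l) x i) ((vecDm m)^[K] c x)
          (fun l => matD^[K + 1] (U K) x j l) ((vecDm m)^[K + 1] c x j)) := by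
  rw [WjMat_eq_bordered]
  ext (p | i | u) (q | l | v)
  · simp [lastBlockEquiv, bordered, Wmat, Wblock]
  · simp [lastBlockEquiv, bordered, Wmat, Wblock, jet, Fin.le_last, matDm_iterate_apply]
  · rfl
  · simp [lastBlockEquiv, bordered, Wmat, Wblock, derivRow]
  · simp [lastBlockEquiv, bordered, Wmat, Wblock, matDm_iterate_apply]
  all_goals rfl

lemma det_WjMat_succ_div_det (hx : (Wmat m K K U x).det ≠ 0) (c : ℝ → Fin n → ℝ) (j : Fin n) :
    (WjMat m (K + 1) (K + 1) j U c x).det / (Wmat m K K U x).det =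
      (bordered (darbouxMat m K U (U K) x) (darboux m K K U c x)
        (fun l => matD^[K + 1] (U K) x j l -
          (jetCoeff m K (K + 1) U x *ᵥ jet m K (fun t i => U K t i l) x) j)
        (darboux m K (K + 1) U c x j)).det := by
  rw [← det_submatrix_equiv_self (lastBlockEquiv K (Fin n)), WjMat_succ_submatrix,
    det_fromBlocks_div_det hx]
  congr 1
  ext (i | u) (l | v) <;> rfl

end Determinants

section BottomRow

variable {m L : ℕ} {U : ℕ → ℝ → Matrix (Fin n) (Fin n) ℝ} {c : ℝ → Fin n → ℝ} {x : ℝ}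

lemma bottomRow_eq_deriv_darboux_add (hU : ∀ k < L + 1, SmoothMat (U k))
    (hblk : ∀ k < L + 1, BlockDiag m (U k))
    (hdet : ∀ᶠ t in nhds x, (Wmat m (L + 1) (L + 1) U t).det ≠ 0)
    {V : ℝ → Matrix (Fin n) (Fin n) ℝ} (hV : SmoothMat V) (hVblk : BlockDiag m V)
    (j : Fin n) :
    (fun l => matD^[L + 2] V x j l -
        (jetCoeff m (L + 1) (L + 2) U x *ᵥ jet m (L + 1) (fun t i => V t i l) x) j) =
      (fun l => deriv (fun t => darbouxMat m (L + 1) U V t j l) x) +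
        leadCoeff m L (L + 1) U x j ᵥ* darbouxMat m (L + 1) U V x := by
  have hx := hdet.self_of_nhds
  funext l
  by_cases hj : (j : ℕ) < m
  · have h := congrFun (darboux_succ hU hblk L.succ_ne_zero hdet (hV.col l)) j
    rw [Pi.add_apply, vecDm, if_pos hj] at h
    rw [matD_iterate_apply_of_lt hj]
    exact h
  · have hj := not_lt.1 hj
    have hrow : jetCoeff m (L + 1) (L + 2) U x j = 0 :=
      funext fun _ => jetCoeff_apply_eq_zero hblk (L + 1).succ_ne_zero hx (.inl hj)
    have hderiv : deriv (fun t => darbouxMat m (L + 1) U V t j l) x = 0 := by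
      have hconst : (fun t => darbouxMat m (L + 1) U V t j l) =ᶠ[nhds x]
          fun _ => if j = l then 1 else 0 := hdet.mono fun t ht =>
        (darboux_apply_of_le hblk L.succ_ne_zero ht hj).trans (hVblk t j l (.inl hj))
      rw [hconst.deriv_eq, deriv_const]
    simp [hVblk.matD_iterate_apply (.inl hj), mulVec, hrow, hderiv,
      leadCoeff_row_eq_zero hblk L.succ_ne_zero hx hj]

theorem det_WjMat_div_det_eq_det_bordered (hU : ∀ k < L + 2, SmoothMat (U k))
    (hblk : ∀ k < L + 2, BlockDiag m (U k)) (hc : SmoothVec c)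
    (hdet : ∀ᶠ t in nhds x, (Wmat m (L + 1) (L + 1) U t).det ≠ 0) (j : Fin n) :
    (WjMat m (L + 2) (L + 2) j U c x).det / (Wmat m (L + 1) (L + 1) U x).det =
      (bordered (darbouxMat m (L + 1) U (U (L + 1)) x) (darboux m (L + 1) (L + 1) U c x)
        (fun i => deriv (fun t => darbouxMat m (L + 1) U (U (L + 1)) t j i) x)
        (vecDm m (darboux m (L + 1) (L + 1) U c) x j)).det := by
  have hU' : ∀ k < L + 1, SmoothMat (U k) := fun k hk => hU k (hk.trans (Nat.lt_succ_self _))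
  have hblk' : ∀ k < L + 1, BlockDiag m (U k) := fun k hk => hblk k (hk.trans (Nat.lt_succ_self _))
  have hlast : L + 1 < L + 2 := Nat.lt_succ_self _
  rw [det_WjMat_succ_div_det hdet.self_of_nhds,
    bottomRow_eq_deriv_darboux_add hU' hblk' hdet (hU _ hlast) (hblk _ hlast),
    darboux_succ hU' hblk' L.succ_ne_zero hdet hc]
  exact det_bordered_add_vecMul ..

end BottomRow

/-- For a purely singular chain (`M = N`), the determinant of the bordered matrix
`Y_N^j` equals `det W_j(U₁,…,U_N,Ψ) / det W(U₁,…,U_{N-1})`. -/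
theorem det_YNj_formula {n : ℕ} (m N : ℕ) (hm : 1 ≤ m) (hmn : m < n) (hN : 2 ≤ N)
    (U : ℕ → ℝ → Matrix (Fin n) (Fin n) ℝ)
    (hUsmooth : ∀ k < N, SmoothMat (U k)) (hUblk : ∀ k < N, BlockDiag m (U k))
    (Ψ : ℝ → Fin n → ℝ) (hΨ : SmoothVec Ψ)
    (a b : ℝ) (hdet : ∀ x ∈ Set.Ioo a b, (Wmat m (N - 1) (N - 1) U x).det ≠ 0)
    (y : ℝ → Matrix (Fin n) (Fin n) ℝ)
    (hy : ∀ (x : ℝ) (j i : Fin n),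
      y x j i =
        (WjMat m (N - 1) (N - 1) j U (fun t l => U (N - 1) t l i) x).det
          / (Wmat m (N - 1) (N - 1) U x).det)
    (θ : ℝ → Fin n → ℝ)
    (hθ : ∀ (x : ℝ) (j : Fin n),
      θ x j = (WjMat m (N - 1) (N - 1) j U Ψ x).det / (Wmat m (N - 1) (N - 1) U x).det) :
    ∀ (j : Fin n), ∀ x ∈ Set.Ioo a b,
      (Matrix.of (fun p q : Fin n ⊕ Unit =>
        match p, q with
        | Sum.inl j', Sum.inl i => y x j' i
        | Sum.inl j', Sum.inr _ => θ x j'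
        | Sum.inr _, Sum.inl i => deriv (fun t => y t j i) x
        | Sum.inr _, Sum.inr _ =>
            if (j : ℕ) < m then deriv (fun t => θ t j) x else θ x j)).det
      = (WjMat m N N j U Ψ x).det / (Wmat m (N - 1) (N - 1) U x).det := by
  obtain ⟨L, rfl⟩ : ∃ L, N = L + 2 := ⟨N - 2, by omega⟩
  have hyθ (t) (ht : t ∈ Set.Ioo a b) :
      y t = darbouxMat m (L + 1) U (U (L + 1)) t ∧ θ t = darboux m (L + 1) (L + 1) U Ψ t :=
    ⟨ext fun j i => (hy t j i).trans (det_WjMat_div_det (hdet t ht) _ j),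
      funext fun j => (hθ t j).trans (det_WjMat_div_det (hdet t ht) _ j)⟩
  intro j x hx
  have hnhds : Set.Ioo a b ∈ nhds x := Ioo_mem_nhds hx.1 hx.2
  have hdy (i) : deriv (fun t => y t j i) x =
      deriv (fun t => darbouxMat m (L + 1) U (U (L + 1)) t j i) x :=
    Filter.EventuallyEq.deriv_eq <| by
      filter_upwards [hnhds] with t ht using by rw [(hyθ t ht).1]
  have hdθ : deriv (fun t => θ t j) x =
      deriv (fun t => darboux m (L + 1) (L + 1) U Ψ t j) x :=
    Filter.EventuallyEq.deriv_eq <| by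
      filter_upwards [hnhds] with t ht using by rw [(hyθ t ht).2]
  refine Eq.trans ?_ (det_WjMat_div_det_eq_det_bordered hUsmooth hUblk hΨ
    (Filter.mem_of_superset hnhds hdet) j).symm
  congr 1
  ext (p | p) (q | q) <;> simp [bordered, vecDm, hyθ x hx, hdy, hdθ]

end SingularDarboux
end
end

section
/- Theorem 1 (resulting action of a chain of M singular and N−M ordinary matrix Darboux transformations): let U₁,…,U_N and Ψ be as in the context, and define the chain recursively by Y₁ = U₁, L^{(m)}_{1←0} = D_m − (∂Y₁)Y₁⁻¹; for 2 ≤ k ≤ M, Y_k = L_{(k−1)←0}U_k and L^{(m)}_{k←k−1} = D_m − (∂Y_k)Y_k⁻¹; for M < k ≤ N, Y_k = L_{(k−1)←0}U_k and L_{k←k−1} = I_n∂ − (∂Y_k)Y_k⁻¹; here L_{k←0} = L_{k←k−1}∘⋯∘L_{1←0} (the first M factors being the singular operators L^{(m)}), and each Y_k(x) is assumed invertible on the interval considered, with det W(U₁,…,U_M;U_{M+1},…,U_N) ≠ 0. Then the vector Φ = L_{N←0}Ψ = (φ₁,…,φₙ)ᵗ has components φ_j = det W_j(U₁,…,U_M;U_{M+1},…,U_N,Ψ)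 / det W(U₁,…,U_M;U_{M+1},…,U_N) for j = 1,…,n. -/
open Matrix

noncomputable section

namespace SingularDarboux

variable {n : ℕ}

/-- A single Darboux transformation step acting on matrix-valued functions:
`D_m Z - (∂Y)Y⁻¹ Z` if `sing = true` (singular step) and `∂Z - (∂Y)Y⁻¹ Z` otherwise. -/
def LstepM (m : ℕ) (sing : Bool) (Y Z : ℝ → Matrix (Fin n) (Fin n) ℝ) :
    ℝ → Matrix (Fin n) (Fin n) ℝ :=
  fun x => (if sing then matDm m Z x else matD Z x) - matD Y x * (Y x)⁻¹ * Z x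

/-- A single Darboux transformation step acting on vector-valued functions. -/
def LstepV (m : ℕ) (sing : Bool) (Y : ℝ → Matrix (Fin n) (Fin n) ℝ) (Ψ : ℝ → Fin n → ℝ) :
    ℝ → Fin n → ℝ :=
  fun x => (if sing then vecDm m Ψ x else vecD Ψ x) - (matD Y x * (Y x)⁻¹).mulVec (Ψ x)

/-- `chainM m M U k Z = L_{k←0} Z`, the result of the first `k` transformation steps
applied to the matrix-valued function `Z`; the step of (0-indexed) number `s` is the
singular operator `L^{(m)} = D_m - (∂Y)Y⁻¹` when `s < M` and the regular operator
`∂ - (∂Y)Y⁻¹` otherwise, with transformation matrix `Y_{s+1} = chainM m M U s (U s)`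
(so that `Y₁ = U 0`, the 0-indexed `U₁`). -/
def chainM (m M : ℕ) (U : ℕ → ℝ → Matrix (Fin n) (Fin n) ℝ) :
    ℕ → (ℝ → Matrix (Fin n) (Fin n) ℝ) → ℝ → Matrix (Fin n) (Fin n) ℝ
  | 0, Z => Z
  | s + 1, Z => LstepM m (decide (s < M)) (chainM m M U s (U s)) (chainM m M U s Z)

/-- `chainV m M U k Ψ = L_{k←0} Ψ` for a vector-valued function `Ψ`. -/
def chainV (m M : ℕ) (U : ℕ → ℝ → Matrix (Fin n) (Fin n) ℝ) :
    ℕ → (ℝ → Fin n → ℝ) → ℝ → Fin n → ℝ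
  | 0, Ψ => Ψ
  | s + 1, Ψ => LstepV m (decide (s < M)) (chainM m M U s (U s)) (chainV m M U s Ψ)

/-!
Each step of the chain is a monic first-order operator on the components it differentiates. On the
other components the block shape of the singular `U_k` makes its potential vanish. Hence every
component of `L_{N←0}` is the term of order `N` plus a combination, with smooth coefficients, of
lower-order differentiated components. At a point these coefficients form one row `v` which serves
every column at once, whether it comes from `Ψ` or from some `U_k`.

The chain annihilates each `U_k`, because step `k` kills `Y_k`. So `v * W` is minus the bottom row
of `W_j`; adding `v` times the upper rows to the bottom row leaves `det W` times the corner, and the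
corner has become `φ_j`. The columns of `W` do not follow `D_m` past the diagonal, where ordinary
derivatives appear. The undifferentiated components are zero there, as they are in
`L_{k←k-1}Y_k = 0`. To treat both kinds of columns alike, the chain acts below on jets rather than
on functions.
-/

open scoped ContDiff

theorem det_fromBlocks_of_mul_add_eq_zero {p q R : Type*} [Fintype p] [DecidableEq p] [Fintype q]
    [DecidableEq q] [CommRing R] {A : Matrix p p R} {C V : Matrix q p R} (h : V * A + C = 0)
    (B : Matrix p q R) (D : Matrix q q R) :
    (fromBlocks A B C D).det = A.det * (V * B + D).det := by
  have hmul : fromBlocks 1 0 V 1 * fromBlocks A B C D = fromBlocks A B 0 (V * B + D) := by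
    simp [fromBlocks_multiply, h]
  simpa using congrArg Matrix.det hmul

/-- Componentwise smoothness of a vector-valued function on a set; the local version of
`SmoothVec`. -/
def SmoothVecOn (S : Set ℝ) (Ψ : ℝ → Fin n → ℝ) : Prop :=
  ∀ i, ContDiffOn ℝ ∞ (fun x => Ψ x i) S

/-- Entrywise smoothness of a matrix-valued function on a set; the local version of
`SmoothMat`. -/
def SmoothMatOn (S : Set ℝ) (Z : ℝ → Matrix (Fin n) (Fin n) ℝ) : Prop :=
  ∀ i j, ContDiffOn ℝ ∞ (fun x => Z x i j) S

/-- The block shape `diag(Z̃, I_{n-m})` on a set; the local version of `BlockDiag`. -/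
def BlockDiagOn (m : ℕ) (S : Set ℝ) (Z : ℝ → Matrix (Fin n) (Fin n) ℝ) : Prop :=
  ∀ x ∈ S, ∀ i j : Fin n, (m ≤ (i : ℕ) ∨ m ≤ (j : ℕ)) → Z x i j = if i = j then 1 else 0

/-- The left logarithmic derivative `(∂Y)Y⁻¹`, which is the potential of the Darboux step with
transformation matrix `Y`. -/
def matLogDeriv (Y : ℝ → Matrix (Fin n) (Fin n) ℝ) : ℝ → Matrix (Fin n) (Fin n) ℝ :=
  fun x => matD Y x * (Y x)⁻¹

theorem matLogDeriv_mul_self {Y : ℝ → Matrix (Fin n) (Fin n) ℝ} {x : ℝ} (h : (Y x).det ≠ 0) :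
    matLogDeriv Y x * Y x = matD Y x := by
  rw [matLogDeriv, Matrix.mul_assoc, nonsing_inv_mul _ h.isUnit, Matrix.mul_one]

section Smoothness

variable {S : Set ℝ} {f : ℝ → ℝ} {Ψ : ℝ → Fin n → ℝ} {Y Z : ℝ → Matrix (Fin n) (Fin n) ℝ}

theorem contDiffOn_deriv (hS : IsOpen S) (hf : ContDiffOn ℝ ∞ f S) :
    ContDiffOn ℝ ∞ (fun x => deriv f x) S :=
  hf.deriv_of_isOpen hS (by simp)

theorem differentiableAt_of_contDiffOn (hS : IsOpen S) (hf : ContDiffOn ℝ ∞ f S) {x : ℝ}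
    (hx : x ∈ S) : DifferentiableAt ℝ f x :=
  (hf.contDiffAt (hS.mem_nhds hx)).differentiableAt (by simp)

theorem SmoothVecOn.vecD (hS : IsOpen S) (hΨ : SmoothVecOn S Ψ) : SmoothVecOn S (vecD Ψ) :=
  fun i => contDiffOn_deriv hS (hΨ i)

theorem SmoothVecOn.vecDm (hS : IsOpen S) (m : ℕ) (hΨ : SmoothVecOn S Ψ) :
    SmoothVecOn S (vecDm m Ψ) := by
  intro i
  by_cases hi : (i : ℕ) < m
  · simpa only [SingularDarboux.vecDm, if_pos hi] using contDiffOn_deriv hS (hΨ i)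
  · simpa only [SingularDarboux.vecDm, if_neg hi] using hΨ i

theorem SmoothMatOn.matD (hS : IsOpen S) (hZ : SmoothMatOn S Z) : SmoothMatOn S (matD Z) :=
  fun i j => contDiffOn_deriv hS (hZ i j)

theorem SmoothMatOn.matDm (hS : IsOpen S) (m : ℕ) (hZ : SmoothMatOn S Z) :
    SmoothMatOn S (matDm m Z) :=
  fun i j => SmoothVecOn.vecDm hS m (fun i => hZ i j) i

theorem SmoothMatOn.mul (hY : SmoothMatOn S Y) (hZ : SmoothMatOn S Z) :
    SmoothMatOn S (fun x => Y x * Z x) := by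
  intro i j
  simp only [Matrix.mul_apply]
  exact ContDiffOn.sum fun l _ => (hY i l).mul (hZ l j)

theorem SmoothMatOn.det (hZ : SmoothMatOn S Z) : ContDiffOn ℝ ∞ (fun x => (Z x).det) S := by
  simp only [Matrix.det_apply']
  exact ContDiffOn.sum fun σ _ => contDiffOn_const.mul (contDiffOn_prod fun i _ => hZ _ _)

theorem SmoothMatOn.inv (hZ : SmoothMatOn S Z) (hdet : ∀ x ∈ S, (Z x).det ≠ 0) :
    SmoothMatOn S (fun x => (Z x)⁻¹) := by
  intro i j
  simp only [Matrix.inv_def, Ring.inverse_eq_inv', Matrix.smul_apply, smul_eq_mul,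
    Matrix.adjugate_apply]
  refine (hZ.det.inv hdet).mul (SmoothMatOn.det fun k l => ?_)
  obtain rfl | hk := eq_or_ne k j
  · simpa only [Matrix.updateRow_self] using contDiffOn_const
  · simpa only [Matrix.updateRow_ne hk] using hZ k l

theorem SmoothMatOn.matLogDeriv (hS : IsOpen S) (hY : SmoothMatOn S Y)
    (hdet : ∀ x ∈ S, (Y x).det ≠ 0) : SmoothMatOn S (matLogDeriv Y) :=
  (hY.matD hS).mul (hY.inv hdet)

theorem SmoothMatOn.LstepM (hS : IsOpen S) (m : ℕ) (sing : Bool) (hY : SmoothMatOn S Y)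
    (hdet : ∀ x ∈ S, (Y x).det ≠ 0) (hZ : SmoothMatOn S Z) :
    SmoothMatOn S (LstepM m sing Y Z) := by
  intro i j
  have hpotential := ((hY.matLogDeriv hS hdet).mul hZ) i j
  cases sing
  · exact (hZ.matD hS i j).sub hpotential
  · exact (hZ.matDm hS m i j).sub hpotential

end Smoothness

section BlockShape

variable {m : ℕ} {S : Set ℝ} {Y Z : ℝ → Matrix (Fin n) (Fin n) ℝ} {x : ℝ} {i j : Fin n}

theorem BlockDiagOn.mul_apply_of_le (hZ : BlockDiagOn m S Z) (hx : x ∈ S)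
    (A : Matrix (Fin n) (Fin n) ℝ) (hj : m ≤ (j : ℕ)) : (A * Z x) i j = A i j := by
  simp [Matrix.mul_apply, hZ x hx _ j (Or.inr hj)]

theorem BlockDiagOn.matD_apply_eq_zero (hS : IsOpen S) (hZ : BlockDiagOn m S Z) (hx : x ∈ S)
    (hij : m ≤ (i : ℕ) ∨ m ≤ (j : ℕ)) : matD Z x i j = 0 := by
  have hconst : Set.EqOn (fun t => Z t i j) (fun _ => if i = j then 1 else 0) S :=
    fun t ht => hZ t ht i j hij
  simpa [matD] using hconst.deriv hS hx

theorem BlockDiagOn.iterate_matD_apply_eq_zero (hS : IsOpen S) (hZ : BlockDiagOn m S Z)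
    (hi : m ≤ (i : ℕ)) {r : ℕ} (hr : r ≠ 0) (hx : x ∈ S) : matD^[r] Z x i j = 0 := by
  induction r, Nat.one_le_iff_ne_zero.mpr hr using Nat.le_induction generalizing x with
  | base => exact hZ.matD_apply_eq_zero hS hx (Or.inl hi)
  | succ r hr ih =>
    have hzero : Set.EqOn (fun t => matD^[r] Z t i j) (fun _ => 0) S :=
      fun t ht => ih (by omega) ht
    rw [Function.iterate_succ_apply']
    simpa [matD] using hzero.deriv hS hx

theorem BlockDiagOn.matLogDeriv_apply_eq_zero (hS : IsOpen S) (hY : BlockDiagOn m S Y)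
    (hx : x ∈ S) (hdet : (Y x).det ≠ 0) (hij : m ≤ (i : ℕ) ∨ m ≤ (j : ℕ)) :
    matLogDeriv Y x i j = 0 := by
  rcases hij with hi | hj
  · rw [matLogDeriv, Matrix.mul_apply]
    exact Finset.sum_eq_zero fun l _ => by
      rw [hY.matD_apply_eq_zero hS hx (Or.inl hi), zero_mul]
  · calc matLogDeriv Y x i j = (matLogDeriv Y x * Y x) i j := (hY.mul_apply_of_le hx _ hj).symm
      _ = matD Y x i j := by rw [matLogDeriv_mul_self hdet]
      _ = 0 := hY.matD_apply_eq_zero hS hx (Or.inr hj)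

theorem BlockDiagOn.LstepM (hS : IsOpen S) (hY : BlockDiagOn m S Y)
    (hdet : ∀ x ∈ S, (Y x).det ≠ 0) (hZ : BlockDiagOn m S Z) :
    BlockDiagOn m S (LstepM m true Y Z) := by
  intro x hx i j hij
  have hpotential : (matLogDeriv Y x * Z x) i j = 0 := by
    rcases hij with hi | hj
    · rw [Matrix.mul_apply]
      exact Finset.sum_eq_zero fun l _ => by
        rw [hY.matLogDeriv_apply_eq_zero hS hx (hdet x hx) (Or.inl hi), zero_mul]
    · rw [hZ.mul_apply_of_le hx _ hj,
        hY.matLogDeriv_apply_eq_zero hS hx (hdet x hx) (Or.inr hj)]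
  have hDm : matDm m Z x i j = if i = j then 1 else 0 := by
    by_cases hi : (i : ℕ) < m
    · have hne : i ≠ j := by rintro rfl; omega
      rw [if_neg hne]
      simpa [matDm, hi, matD] using hZ.matD_apply_eq_zero hS hx hij
    · simpa [matDm, hi] using hZ x hx i j hij
  calc SingularDarboux.LstepM m true Y Z x i j
      = matDm m Z x i j - (matLogDeriv Y x * Z x) i j := rfl
    _ = if i = j then 1 else 0 := by rw [hDm, hpotential, sub_zero]

end BlockShape

/-- Step number `s` (0-indexed) of a chain with `M` singular steps differentiates component `i`;
otherwise it is singular and leaves that component unchanged up to the potential term. -/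
abbrev Differentiates (m M s : ℕ) (i : Fin n) : Prop := (i : ℕ) < m ∨ M ≤ s

/-- The transformation matrices `U` generate on the open set `S` a chain of `N` Darboux
transformations of which the first `M` are singular. -/
structure IsDarbouxChain (m M N : ℕ) (S : Set ℝ) (U : ℕ → ℝ → Matrix (Fin n) (Fin n) ℝ) :
    Prop where
  isOpen : IsOpen S
  le : M ≤ N
  smooth : ∀ k < N, SmoothMatOn S (U k)
  blockDiag : ∀ k < M, BlockDiagOn m S (U k)
  det_ne_zero : ∀ s < N, ∀ x ∈ S, (chainM m M U s (U s) x).det ≠ 0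

/-- The potential `(∂Y_{s+1})Y_{s+1}⁻¹` of step number `s` (0-indexed) of the chain. -/
def stepPotential (m M : ℕ) (U : ℕ → ℝ → Matrix (Fin n) (Fin n) ℝ) (s : ℕ) :
    ℝ → Matrix (Fin n) (Fin n) ℝ :=
  matLogDeriv (chainM m M U s (U s))

theorem chainV_succ_apply (m M : ℕ) (U : ℕ → ℝ → Matrix (Fin n) (Fin n) ℝ) (s : ℕ)
    (Ψ : ℝ → Fin n → ℝ) (x : ℝ) (i : Fin n) :
    chainV m M U (s + 1) Ψ x i =
      (if Differentiates m M s i then deriv (fun t => chainV m M U s Ψ t i) x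
        else chainV m M U s Ψ x i) - (stepPotential m M U s x *ᵥ chainV m M U s Ψ x) i := by
  by_cases hs : s < M <;> by_cases hi : (i : ℕ) < m <;>
    simp [chainV, LstepV, stepPotential, matLogDeriv, vecD, vecDm, hs, hi, not_le.mpr]

theorem chainM_apply_eq_chainV (m M : ℕ) (U : ℕ → ℝ → Matrix (Fin n) (Fin n) ℝ) (s : ℕ)
    (Z : ℝ → Matrix (Fin n) (Fin n) ℝ) (x : ℝ) (i j : Fin n) :
    chainM m M U s Z x i j = chainV m M U s (fun t i => Z t i j) x i := by
  induction s generalizing x i with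
  | zero => rfl
  | succ s ih =>
    by_cases hs : s < M <;>
      simp [chainM, chainV, LstepM, LstepV, matD, matDm, vecD, vecDm, hs, ih, mul_apply, mulVec,
        dotProduct]

namespace IsDarbouxChain

variable {m M N s : ℕ} {S : Set ℝ} {U : ℕ → ℝ → Matrix (Fin n) (Fin n) ℝ}

theorem smoothMatOn_chainM (hU : IsDarbouxChain m M N S U) (hs : s ≤ N)
    {Z : ℝ → Matrix (Fin n) (Fin n) ℝ} (hZ : SmoothMatOn S Z) :
    SmoothMatOn S (chainM m M U s Z) := by
  induction s generalizing Z with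
  | zero => exact hZ
  | succ s ih =>
    have hs' : s < N := hs
    exact .LstepM hU.isOpen m _ (ih hs'.le (hU.smooth s hs')) (hU.det_ne_zero s hs')
      (ih hs'.le hZ)

theorem blockDiagOn_chainM (hU : IsDarbouxChain m M N S U) (hs : s ≤ M)
    {Z : ℝ → Matrix (Fin n) (Fin n) ℝ} (hZ : BlockDiagOn m S Z) :
    BlockDiagOn m S (chainM m M U s Z) := by
  induction s generalizing Z with
  | zero => exact hZ
  | succ s ih =>
    have hs' : s < M := hs
    rw [chainM, decide_eq_true hs']
    exact .LstepM hU.isOpen (ih hs'.le (hU.blockDiag s hs'))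
      (hU.det_ne_zero s (hs'.trans_le hU.le)) (ih hs'.le hZ)

theorem smoothMatOn_stepPotential (hU : IsDarbouxChain m M N S U) (hs : s < N) :
    SmoothMatOn S (stepPotential m M U s) :=
  (hU.smoothMatOn_chainM hs.le (hU.smooth s hs)).matLogDeriv hU.isOpen (hU.det_ne_zero s hs)

theorem stepPotential_apply_eq_zero (hU : IsDarbouxChain m M N S U) (hs : s < M) {x : ℝ}
    (hx : x ∈ S) {i l : Fin n} (hil : m ≤ (i : ℕ) ∨ m ≤ (l : ℕ)) :
    stepPotential m M U s x i l = 0 :=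
  (hU.blockDiagOn_chainM hs.le (hU.blockDiag s hs)).matLogDeriv_apply_eq_zero hU.isOpen hx
    (hU.det_ne_zero s (hs.trans_le hU.le) x hx) hil

theorem stepPotential_mulVec_apply_eq_zero (hU : IsDarbouxChain m M N S U) {x : ℝ} (hx : x ∈ S)
    {i : Fin n} (hi : ¬ Differentiates m M s i) (v : Fin n → ℝ) :
    (stepPotential m M U s x *ᵥ v) i = 0 := by
  push Not at hi
  simp [mulVec, dotProduct, hU.stepPotential_apply_eq_zero hi.2 hx (Or.inl hi.1)]

end IsDarbouxChain

/-- A sequence of vector-valued functions that is compatible with the chain: passing from term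
`r` to term `r + 1` differentiates every component that step `r` differentiates. The other
components of term `r + 1` are arbitrary, since the columns of `W` and its bordering column
treat them differently. -/
def IsJet (m M : ℕ) (S : Set ℝ) (w : ℕ → ℝ → Fin n → ℝ) : Prop :=
  ∀ r (i : Fin n), Differentiates m M r i → ∀ x ∈ S,
    HasDerivAt (fun t => w r t i) (w (r + 1) x i) x

/-- The action of the first `s` steps of the chain on a jet. It mirrors `chainV`, except that a
component which a step does not differentiate is read off from the next term of the jet. -/
def chainJet (m M : ℕ) (U : ℕ → ℝ → Matrix (Fin n) (Fin n) ℝ) :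
    ℕ → (ℕ → ℝ → Fin n → ℝ) → ℝ → Fin n → ℝ
  | 0, w => w 0
  | s + 1, w => fun x i =>
      (if Differentiates m M s i then deriv (fun t => chainJet m M U s w t i) x
        else w (s + 1) x i) - (stepPotential m M U s x *ᵥ chainJet m M U s w x) i

theorem chainJet_succ_apply (m M : ℕ) (U : ℕ → ℝ → Matrix (Fin n) (Fin n) ℝ) (s : ℕ)
    (w : ℕ → ℝ → Fin n → ℝ) (x : ℝ) (i : Fin n) :
    chainJet m M U (s + 1) w x i =
      (if Differentiates m M s i then deriv (fun t => chainJet m M U s w t i) x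
        else w (s + 1) x i) - (stepPotential m M U s x *ᵥ chainJet m M U s w x) i :=
  rfl

namespace IsDarbouxChain

variable {m M N s : ℕ} {S : Set ℝ} {U : ℕ → ℝ → Matrix (Fin n) (Fin n) ℝ}
  {w : ℕ → ℝ → Fin n → ℝ} {x : ℝ} {i : Fin n}

theorem chainJet_succ_apply_of_not_differentiates (hU : IsDarbouxChain m M N S U)
    (hi : ¬ Differentiates m M s i) (hx : x ∈ S) :
    chainJet m M U (s + 1) w x i = w (s + 1) x i := by
  rw [chainJet_succ_apply, if_neg hi, hU.stepPotential_mulVec_apply_eq_zero hx hi, sub_zero]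

theorem chainJet_apply_of_not_differentiates (hU : IsDarbouxChain m M N S U)
    (hi : ¬ Differentiates m M s i) (hx : x ∈ S) : chainJet m M U s w x i = w s x i := by
  cases s with
  | zero => rfl
  | succ s => exact hU.chainJet_succ_apply_of_not_differentiates (by omega) hx

theorem chainV_eq_chainJet (hU : IsDarbouxChain m M N S U)
    (hw : ∀ r < s, ∀ i, ¬ Differentiates m M r i → ∀ x ∈ S, w (r + 1) x i = w r x i)
    (hx : x ∈ S) : chainV m M U s (w 0) x i = chainJet m M U s w x i := by
  induction s generalizing x i with
  | zero => rfl
  | succ s ih =>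
    have ih' : ∀ {x i}, x ∈ S → chainV m M U s (w 0) x i = chainJet m M U s w x i :=
      ih fun r hr => hw r (by omega)
    have hvec : chainV m M U s (w 0) x = chainJet m M U s w x := funext fun _ => ih' hx
    rw [chainV_succ_apply, chainJet_succ_apply, hvec]
    congr 1
    split_ifs with hi
    · exact Set.EqOn.deriv (fun t ht => ih' ht) hU.isOpen hx
    · rw [hU.chainJet_apply_of_not_differentiates hi hx, hw s (by omega) i hi x hx]

end IsDarbouxChain

/-- The positions `(r, l)` in a jet of the components `l` of terms `r < s` that step `r`
differentiates. -/
def diffSlots (n m M s : ℕ) : Finset (ℕ × Fin n) :=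
  (Finset.range s ×ˢ Finset.univ).filter fun p => Differentiates m M p.1 p.2

theorem mem_diffSlots {m M s : ℕ} {p : ℕ × Fin n} :
    p ∈ diffSlots n m M s ↔ p.1 < s ∧ Differentiates m M p.1 p.2 := by
  simp [diffSlots]

theorem hasDerivAt_sum_mul_jet {m M s : ℕ} {S : Set ℝ} (hS : IsOpen S)
    {c : ℕ × Fin n → ℝ → ℝ} (hc : ∀ p, ContDiffOn ℝ ∞ (c p) S) {w : ℕ → ℝ → Fin n → ℝ}
    (hw : IsJet m M S w) {x : ℝ} (hx : x ∈ S) :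
    HasDerivAt (fun t => ∑ p ∈ diffSlots n m M s, c p t * w p.1 t p.2)
      (∑ p ∈ diffSlots n m M s, (deriv (c p) x * w p.1 x p.2 + c p x * w (p.1 + 1) x p.2)) x :=
  .fun_sum fun p hp => (differentiableAt_of_contDiffOn hS (hc p) hx).hasDerivAt.mul
    (hw p.1 p.2 (mem_diffSlots.mp hp).2 x hx)

/-- The functionals of jets given on `S` by a linear combination, with smooth coefficients, of
the entries at the positions `diffSlots n m M s`. Only differentiated components are admitted,
so that the derivative of such a functional is one of order at most one higher. -/
def lowerOrder (n m M : ℕ) (S : Set ℝ) (s : ℕ) :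
    AddSubgroup ((ℕ → ℝ → Fin n → ℝ) → ℝ → ℝ) where
  carrier := {F | ∃ c : ℕ × Fin n → ℝ → ℝ, (∀ p, ContDiffOn ℝ ∞ (c p) S) ∧
    ∀ w, IsJet m M S w → Set.EqOn (F w) (fun x => ∑ p ∈ diffSlots n m M s, c p x * w p.1 x p.2) S}
  zero_mem' := ⟨0, fun _ => contDiffOn_const, fun _ _ _ _ => by simp⟩
  add_mem' := by
    rintro F G ⟨c, hc, hF⟩ ⟨d, hd, hG⟩
    refine ⟨c + d, fun p => (hc p).add (hd p), fun w hw x hx => ?_⟩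
    simp [hF w hw hx, hG w hw hx, add_mul, Finset.sum_add_distrib]
  neg_mem' := by
    rintro F ⟨c, hc, hF⟩
    refine ⟨-c, fun p => (hc p).neg, fun w hw x hx => ?_⟩
    simp [hF w hw hx]

section LowerOrder

variable {m M s : ℕ} {S : Set ℝ} {F G : (ℕ → ℝ → Fin n → ℝ) → ℝ → ℝ}

theorem lowerOrder_congr (hG : G ∈ lowerOrder n m M S s)
    (hFG : ∀ w, IsJet m M S w → Set.EqOn (F w) (G w) S) : F ∈ lowerOrder n m M S s := by
  obtain ⟨c, hc, hG⟩ := hG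
  exact ⟨c, hc, fun w hw => (hFG w hw).trans (hG w hw)⟩

theorem mul_mem_lowerOrder {f : ℝ → ℝ} (hf : ContDiffOn ℝ ∞ f S)
    (hF : F ∈ lowerOrder n m M S s) : (fun w => f * F w) ∈ lowerOrder n m M S s := by
  obtain ⟨c, hc, hF⟩ := hF
  refine ⟨fun p => f * c p, fun p => hf.mul (hc p), fun w hw x hx => ?_⟩
  simp [hF w hw hx, Finset.mul_sum, mul_assoc]

theorem coord_mem_lowerOrder {r : ℕ} (hr : r < s) {l : Fin n} (hl : Differentiates m M r l) :
    (fun w x => w r x l) ∈ lowerOrder n m M S s := by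
  refine ⟨Pi.single (r, l) 1, fun p => ?_, fun w _ x _ => ?_⟩
  · obtain rfl | hp := eq_or_ne p (r, l)
    · rw [Pi.single_eq_same]
      exact contDiffOn_const
    · rw [Pi.single_eq_of_ne hp]
      exact contDiffOn_const
  · beta_reduce
    rw [Finset.sum_eq_single_of_mem (r, l) (mem_diffSlots.mpr ⟨hr, hl⟩) fun p _ hp => by simp [hp]]
    simp

theorem lowerOrder_mono {t : ℕ} (hst : s ≤ t) : lowerOrder n m M S s ≤ lowerOrder n m M S t := by
  rintro F ⟨c, hc, hF⟩
  have hsum : (∑ p ∈ diffSlots n m M s, fun w => c p * fun x => w p.1 x p.2) ∈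
      lowerOrder n m M S t := by
    refine sum_mem fun p hp => ?_
    obtain ⟨hps, hpd⟩ := mem_diffSlots.mp hp
    exact mul_mem_lowerOrder (hc p) (coord_mem_lowerOrder (hps.trans_le hst) hpd)
  exact lowerOrder_congr hsum fun w hw x hx => by simp [hF w hw hx, Finset.sum_apply]

theorem differentiableAt_of_mem_lowerOrder (hS : IsOpen S) (hF : F ∈ lowerOrder n m M S s)
    {w : ℕ → ℝ → Fin n → ℝ} (hw : IsJet m M S w) {x : ℝ} (hx : x ∈ S) :
    DifferentiableAt ℝ (F w) x := by
  obtain ⟨c, hc, hF⟩ := hF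
  exact (hasDerivAt_sum_mul_jet hS hc hw hx).differentiableAt.congr_of_eventuallyEq
    ((hF w hw).eventuallyEq_of_mem (hS.mem_nhds hx))

theorem deriv_mem_lowerOrder (hS : IsOpen S) (hF : F ∈ lowerOrder n m M S s) :
    (fun w => deriv (F w)) ∈ lowerOrder n m M S (s + 1) := by
  obtain ⟨c, hc, hF⟩ := hF
  have hsum : (∑ p ∈ diffSlots n m M s, ((fun w => deriv (c p) * fun x => w p.1 x p.2) +
      fun w => c p * fun x => w (p.1 + 1) x p.2)) ∈ lowerOrder n m M S (s + 1) := by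
    refine sum_mem fun p hp => ?_
    obtain ⟨hps, hpd⟩ := mem_diffSlots.mp hp
    exact add_mem
      (mul_mem_lowerOrder (contDiffOn_deriv hS (hc p)) (coord_mem_lowerOrder (by omega) hpd))
      (mul_mem_lowerOrder (hc p) (coord_mem_lowerOrder (by omega) (by omega)))
  refine lowerOrder_congr hsum fun w hw x hx => ?_
  rw [(hF w hw).deriv hS hx, (hasDerivAt_sum_mul_jet hS hc hw hx).deriv]
  simp [Finset.sum_apply]

end LowerOrder

namespace IsDarbouxChain

variable {m M N s : ℕ} {S : Set ℝ} {U : ℕ → ℝ → Matrix (Fin n) (Fin n) ℝ}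

theorem stepPotential_mul_coord_mem_lowerOrder (hU : IsDarbouxChain m M N S U) (hs : s < N)
    (i l : Fin n) : (fun w => (fun x => stepPotential m M U s x i l) * fun x => w s x l) ∈
      lowerOrder n m M S (s + 1) := by
  by_cases hl : Differentiates m M s l
  · exact mul_mem_lowerOrder (hU.smoothMatOn_stepPotential hs i l)
      (coord_mem_lowerOrder s.lt_succ_self hl)
  · push Not at hl
    refine lowerOrder_congr (zero_mem _) fun w _ x hx => ?_
    simp [hU.stepPotential_apply_eq_zero hl.2 hx (Or.inr hl.1)]

theorem chainJet_sub_mem_lowerOrder (hU : IsDarbouxChain m M N S U) (hs : s ≤ N) (i : Fin n) :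
    (fun w x => chainJet m M U s w x i - w s x i) ∈ lowerOrder n m M S s := by
  induction s generalizing i with
  | zero => exact lowerOrder_congr (zero_mem _) fun w _ x _ => sub_self (w 0 x i)
  | succ s ih =>
    by_cases hi : Differentiates m M s i
    · let R : Fin n → (ℕ → ℝ → Fin n → ℝ) → ℝ → ℝ := fun l w x => chainJet m M U s w x l - w s x l
      have hR : ∀ l, R l ∈ lowerOrder n m M S s := ih (by omega)
      have hpotential : (∑ l, ((fun w => (fun x => stepPotential m M U s x i l) * R l w) +
          fun w => (fun x => stepPotential m M U s x i l) * fun x => w s x l)) ∈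
            lowerOrder n m M S (s + 1) :=
        sum_mem fun l _ => add_mem
          (mul_mem_lowerOrder (hU.smoothMatOn_stepPotential hs i l)
            (lowerOrder_mono s.le_succ (hR l)))
          (hU.stepPotential_mul_coord_mem_lowerOrder hs i l)
      refine lowerOrder_congr (sub_mem (deriv_mem_lowerOrder hU.isOpen (hR i)) hpotential)
        fun w hw x hx => ?_
      have hderiv : deriv (fun t => chainJet m M U s w t i) x =
          deriv (R i w) x + w (s + 1) x i := by
        have hRw := differentiableAt_of_mem_lowerOrder hU.isOpen (hR i) hw hx
        simpa [R] using (hRw.hasDerivAt.fun_add (hw s i hi x hx)).deriv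
      have hmulVec : (stepPotential m M U s x *ᵥ chainJet m M U s w x) i =
          ∑ l, (stepPotential m M U s x i l * R l w x + stepPotential m M U s x i l * w s x l) := by
        simp only [R, ← mul_add, sub_add_cancel]
        rfl
      simp only [chainJet_succ_apply, if_pos hi, hderiv, hmulVec, Pi.sub_apply, Pi.add_apply,
        Pi.mul_apply, Finset.sum_apply]
      ring
    · refine lowerOrder_congr (zero_mem _) fun w _ x hx => ?_
      simp [hU.chainJet_succ_apply_of_not_differentiates hi hx]

theorem exists_chainJet_apply_eq (hU : IsDarbouxChain m M N S U) {x : ℝ} (hx : x ∈ S)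
    (i : Fin n) : ∃ v : Fin N × Fin n → ℝ, ∀ w, IsJet m M S w →
      chainJet m M U N w x i = ∑ p, v p * w p.1 x p.2 + w N x i := by
  obtain ⟨c, -, hc⟩ := hU.chainJet_sub_mem_lowerOrder le_rfl i
  refine ⟨fun p => if Differentiates m M p.1 p.2 then c (p.1, p.2) x else 0, fun w hw => ?_⟩
  rw [← sub_eq_iff_eq_add, Fintype.sum_prod_type]
  simpa [diffSlots, Finset.sum_filter, Finset.sum_product, Finset.sum_range] using hc w hw hx

end IsDarbouxChain

section BlockColumns

variable {m M : ℕ} {S : Set ℝ}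

theorem Wcol_zero (m M : ℕ) (Ψ : ℝ → Fin n → ℝ) : Wcol m M 0 Ψ = Ψ := by
  rcases Nat.eq_zero_or_pos M with rfl | hM
  · simp [Wcol]
  · simp [Wcol, hM]

theorem Wcol_succ_of_lt {r : ℕ} (hr : r < M) (Ψ : ℝ → Fin n → ℝ) :
    Wcol m M (r + 1) Ψ = vecDm m (Wcol m M r Ψ) := by
  have hDm : ∀ q ≤ M, Wcol m M q Ψ = (vecDm m)^[q] Ψ := fun q hq => by
    obtain hq | rfl := hq.lt_or_eq
    · rw [Wcol, if_pos hq]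
    · simp [Wcol]
  rw [hDm (r + 1) hr, hDm r hr.le, Function.iterate_succ_apply']

theorem Wcol_succ_of_le {r : ℕ} (hr : M ≤ r) (Ψ : ℝ → Fin n → ℝ) :
    Wcol m M (r + 1) Ψ = vecD (Wcol m M r Ψ) := by
  rw [Wcol, Wcol, if_neg (by omega), if_neg (by omega), Nat.succ_sub hr,
    Function.iterate_succ_apply']

theorem Wcol_succ_apply (m M r : ℕ) (Ψ : ℝ → Fin n → ℝ) (x : ℝ) (i : Fin n) :
    Wcol m M (r + 1) Ψ x i =
      if Differentiates m M r i then deriv (fun t => Wcol m M r Ψ t i) x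
      else Wcol m M r Ψ x i := by
  rcases lt_or_ge r M with hr | hr
  · simp [Wcol_succ_of_lt hr, vecDm, Differentiates, hr.not_ge]
  · simp [Wcol_succ_of_le hr, vecD, Differentiates, hr]

theorem smoothVecOn_Wcol (hS : IsOpen S) {Ψ : ℝ → Fin n → ℝ} (hΨ : SmoothVecOn S Ψ) (r : ℕ) :
    SmoothVecOn S (Wcol m M r Ψ) := by
  induction r with
  | zero => rwa [Wcol_zero]
  | succ r ih =>
    rcases lt_or_ge r M with hr | hr
    · exact Wcol_succ_of_lt hr Ψ ▸ ih.vecDm hS m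
    · exact Wcol_succ_of_le hr Ψ ▸ ih.vecD hS

theorem isJet_Wcol (hS : IsOpen S) {Ψ : ℝ → Fin n → ℝ} (hΨ : SmoothVecOn S Ψ) :
    IsJet m M S fun r => Wcol m M r Ψ := by
  intro r i hi x hx
  simp only [Wcol_succ_apply, if_pos hi]
  exact (differentiableAt_of_contDiffOn hS (smoothVecOn_Wcol hS hΨ r i) hx).hasDerivAt

theorem iterate_matDm_apply (m r : ℕ) (Z : ℝ → Matrix (Fin n) (Fin n) ℝ) (x : ℝ) (i j : Fin n) :
    (matDm m)^[r] Z x i j = (vecDm m)^[r] (fun t i => Z t i j) x i := by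
  induction r generalizing x i with
  | zero => rfl
  | succ r ih => simp only [Function.iterate_succ_apply', matDm, vecDm, of_apply, ih]

theorem iterate_matD_apply (r : ℕ) (Z : ℝ → Matrix (Fin n) (Fin n) ℝ) (x : ℝ) (i j : Fin n) :
    matD^[r] Z x i j = vecD^[r] (fun t i => Z t i j) x i := by
  induction r generalizing x i with
  | zero => rfl
  | succ r ih => simp only [Function.iterate_succ_apply', matD, vecD, of_apply, ih]

theorem iterate_matDm_apply_of_lt {i : Fin n} (hi : (i : ℕ) < m) (r : ℕ)
    (Z : ℝ → Matrix (Fin n) (Fin n) ℝ) (x : ℝ) (j : Fin n) :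
    (matDm m)^[r] Z x i j = matD^[r] Z x i j := by
  induction r generalizing x with
  | zero => rfl
  | succ r ih => simp only [Function.iterate_succ_apply', matD, matDm, of_apply, ih, if_pos hi]

theorem Wblock_apply_eq_Wcol {r k : ℕ} (h : r ≤ k ∨ M ≤ k) (Z : ℝ → Matrix (Fin n) (Fin n) ℝ)
    (x : ℝ) (i j : Fin n) :
    Wblock m M r k Z x i j = Wcol m M r (fun t i => Z t i j) x i := by
  have hM : (fun t i => (matDm m)^[M] Z t i j) = (vecDm m)^[M] (fun t i => Z t i j) :=
    funext₂ fun t i => iterate_matDm_apply m M Z t i j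
  by_cases hk : k < M
  · rw [Wblock, Wcol, if_pos hk, if_pos (by omega), if_pos (by omega), iterate_matDm_apply]
  · rw [Wblock, Wcol, if_neg hk]
    split_ifs
    · rw [iterate_matDm_apply]
    · rw [iterate_matD_apply, hM]

theorem Wblock_apply_eq_iterate_matD {r k : ℕ} {i : Fin n} (hk : k < M)
    (h : (i : ℕ) < m ∨ k < r) (Z : ℝ → Matrix (Fin n) (Fin n) ℝ) (x : ℝ) (j : Fin n) :
    Wblock m M r k Z x i j = matD^[r] Z x i j := by
  rw [Wblock, if_pos hk]
  split_ifs with hr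
  · exact iterate_matDm_apply_of_lt (by omega) r Z x j
  · rfl

theorem SmoothMatOn.Wblock (hS : IsOpen S) {Z : ℝ → Matrix (Fin n) (Fin n) ℝ}
    (hZ : SmoothMatOn S Z) (m M r k : ℕ) : SmoothMatOn S (Wblock m M r k Z) := by
  have hD : ∀ q {Y}, SmoothMatOn S Y → SmoothMatOn (n := n) S (SingularDarboux.matD^[q] Y) :=
    fun q _ hY => Function.Iterate.rec (SmoothMatOn S) hY (fun _ h => h.matD hS) q
  have hDm : ∀ q, SmoothMatOn S ((SingularDarboux.matDm m)^[q] Z) :=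
    fun q => Function.Iterate.rec (SmoothMatOn S) hZ (fun _ h => h.matDm hS m) q
  unfold SingularDarboux.Wblock
  split_ifs
  exacts [hDm r, hD r hZ, hDm r, hD _ (hDm M)]

theorem isJet_Wblock (hS : IsOpen S) {Z : ℝ → Matrix (Fin n) (Fin n) ℝ} (hZ : SmoothMatOn S Z)
    (k : ℕ) (j : Fin n) : IsJet m M S fun r x i => Wblock m M r k Z x i j := by
  intro r i hi x hx
  have hsucc : Wblock m M (r + 1) k Z x i j = deriv (fun t => Wblock m M r k Z t i j) x := by
    by_cases hk : k < M
    · simp only [Wblock_apply_eq_iterate_matD (r := r) hk (by omega : (i : ℕ) < m ∨ k < r),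
        Wblock_apply_eq_iterate_matD (r := r + 1) hk (by omega : (i : ℕ) < m ∨ k < r + 1),
        Function.iterate_succ_apply']
      rfl
    · have hk' : M ≤ k := not_lt.mp hk
      simp only [Wblock_apply_eq_Wcol (Or.inr hk'), Wcol_succ_apply, if_pos hi]
  simp only [hsucc]
  exact (differentiableAt_of_contDiffOn hS (hZ.Wblock hS m M r k i j) hx).hasDerivAt

theorem BlockDiagOn.Wblock_succ_apply_eq_zero (hS : IsOpen S)
    {Z : ℝ → Matrix (Fin n) (Fin n) ℝ} (hZ : BlockDiagOn m S Z) {r k : ℕ} (hk : k < M)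
    (hkr : k ≤ r) {x : ℝ} (hx : x ∈ S) {i : Fin n} (hi : m ≤ (i : ℕ)) (j : Fin n) :
    Wblock m M (r + 1) k Z x i j = 0 := by
  rw [Wblock_apply_eq_iterate_matD hk (by omega)]
  exact hZ.iterate_matD_apply_eq_zero hS hi r.succ_ne_zero hx

theorem Wrow_eq_Wblock {N k : ℕ} (hMN : M ≤ N) (hk : k < N) (Z : ℝ → Matrix (Fin n) (Fin n) ℝ)
    (j : Fin n) (x : ℝ) : Wrow m M N k Z j x = Wblock m M N k Z x j := by
  by_cases hkM : k < M
  · simp [Wrow, Wblock, hkM, hk.not_ge]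
  · simp [Wrow, Wblock, hkM, hMN.not_gt]

theorem WjMat_eq_fromBlocks {N : ℕ} (hMN : M ≤ N) (j : Fin n)
    (U : ℕ → ℝ → Matrix (Fin n) (Fin n) ℝ) (Ψ : ℝ → Fin n → ℝ) (x : ℝ) :
    WjMat m M N j U Ψ x = fromBlocks (Wmat m M N U x)
      (replicateCol Unit fun p => Wcol m M p.1 Ψ x p.2)
      (replicateRow Unit fun q => Wblock m M N q.1 (U q.1) x j q.2)
      (of fun _ _ => Wcol m M N Ψ x j) := by
  ext (p | p) (q | q)
  · rfl
  · rfl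
  · exact congrFun (Wrow_eq_Wblock hMN q.1.2 (U q.1) j x) q.2
  · simp [WjMat, Wcol, hMN.not_gt]

end BlockColumns

namespace IsDarbouxChain

variable {m M N s : ℕ} {S : Set ℝ} {U : ℕ → ℝ → Matrix (Fin n) (Fin n) ℝ} {x : ℝ}

theorem chainV_eq_chainJet_Wcol (hU : IsDarbouxChain m M N S U) (Ψ : ℝ → Fin n → ℝ)
    (hx : x ∈ S) (i : Fin n) :
    chainV m M U s Ψ x i = chainJet m M U s (fun r => Wcol m M r Ψ) x i := by
  rw [← hU.chainV_eq_chainJet (fun r _ i hi x _ => by rw [Wcol_succ_apply, if_neg hi]) hx,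
    Wcol_zero]

theorem chainM_apply_eq_chainJet_Wblock (hU : IsDarbouxChain m M N S U) (k : ℕ)
    (Z : ℝ → Matrix (Fin n) (Fin n) ℝ) (hx : x ∈ S) (i j : Fin n) :
    chainM m M U k Z x i j = chainJet m M U k (fun r x i => Wblock m M r k Z x i j) x i := by
  have hzero : (fun x i => Wblock m M 0 k Z x i j) = fun x i => Z x i j := by
    funext x i
    rw [Wblock_apply_eq_Wcol (Or.inl k.zero_le), Wcol_zero]
  rw [chainM_apply_eq_chainV, ← hU.chainV_eq_chainJet (fun r hr i hi x _ => ?_) hx, hzero]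
  rw [Wblock_apply_eq_Wcol (Or.inl hr), Wblock_apply_eq_Wcol (Or.inl hr.le), Wcol_succ_apply,
    if_neg hi]

theorem chainJet_Wblock_eq_zero (hU : IsDarbouxChain m M N S U) {k : ℕ} (hks : k < s)
    (hs : s ≤ N) (hx : x ∈ S) (i j : Fin n) :
    chainJet m M U s (fun r x i => Wblock m M r k (U k) x i j) x i = 0 := by
  have hfixed : ∀ r, k ≤ r → ∀ x ∈ S, ∀ i, ¬ Differentiates m M r i →
      chainJet m M U (r + 1) (fun r x i => Wblock m M r k (U k) x i j) x i = 0 := by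
    intro r hkr x hx i hi
    rw [hU.chainJet_succ_apply_of_not_differentiates hi hx]
    push Not at hi
    have hkM : k < M := hkr.trans_lt hi.2
    exact (hU.blockDiag k hkM).Wblock_succ_apply_eq_zero hU.isOpen hkM hkr hx hi.1 j
  induction s, hks using Nat.le_induction generalizing x i with
  | base =>
    by_cases hi : Differentiates m M k i
    · have hY : ∀ t ∈ S, ∀ l, chainJet m M U k (fun r x i => Wblock m M r k (U k) x i j) t l =
          chainM m M U k (U k) t l j :=
        fun t ht l => (hU.chainM_apply_eq_chainJet_Wblock k (U k) ht l j).symm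
      have hderiv := Set.EqOn.deriv (fun t ht => hY t ht i) hU.isOpen hx
      have hmul := congrFun₂ (matLogDeriv_mul_self (hU.det_ne_zero k hs x hx)) i j
      rw [chainJet_succ_apply, if_pos hi, hderiv, funext (hY x hx), sub_eq_zero]
      exact hmul.symm
    · exact hfixed k le_rfl x hx i hi
  | succ s hks ih =>
    by_cases hi : Differentiates m M s i
    · have hzero : ∀ t ∈ S, ∀ l,
          chainJet m M U s (fun r x i => Wblock m M r k (U k) x i j) t l = 0 :=
        fun t ht l => ih (by omega) ht l
      have hderiv := Set.EqOn.deriv (fun t ht => hzero t ht i) hU.isOpen hx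
      rw [chainJet_succ_apply, if_pos hi, hderiv, funext (hzero x hx)]
      simp [mulVec, dotProduct]
    · exact hfixed s (by omega) x hx i hi

end IsDarbouxChain

theorem chain_action_on_vector_general {m M N : ℕ} {S : Set ℝ}
    {U : ℕ → ℝ → Matrix (Fin n) (Fin n) ℝ} {Ψ : ℝ → Fin n → ℝ}
    (hU : IsDarbouxChain m M N S U) (hΨ : SmoothVecOn S Ψ) {x : ℝ} (hx : x ∈ S) (j : Fin n) :
    chainV m M U N Ψ x j * (Wmat m M N U x).det = (WjMat m M N j U Ψ x).det := by
  obtain ⟨v, hv⟩ := hU.exists_chainJet_apply_eq hx j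
  have hannihilates : replicateRow Unit v * Wmat m M N U x +
      replicateRow Unit (fun q => Wblock m M N q.1 (U q.1) x j q.2) = 0 := by
    ext _ q
    have hq := hv _ (isJet_Wblock hU.isOpen (hU.smooth q.1 q.1.2) q.1 q.2)
    rw [hU.chainJet_Wblock_eq_zero q.1.2 le_rfl hx] at hq
    exact hq.symm
  have hΨv := hv _ (isJet_Wcol hU.isOpen hΨ)
  rw [WjMat_eq_fromBlocks hU.le, det_fromBlocks_of_mul_add_eq_zero hannihilates,
    hU.chainV_eq_chainJet_Wcol Ψ hx, hΨv, mul_comm]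
  simp [mul_apply]

/-- Theorem 1 of the paper: the resulting action of a chain of `M` singular and
`N - M` ordinary matrix Darboux transformations on a vector-valued function `Ψ`
is given by ratios of determinants:
`(L_{N←0}Ψ)_j = det W_j(U₁,…,U_M;U_{M+1},…,U_N,Ψ) / det W(U₁,…,U_M;U_{M+1},…,U_N)`. -/
theorem chain_action_on_vector {n : ℕ} (m M N : ℕ)
    (hm : 1 ≤ m) (hmn : m < n) (hM : 1 ≤ M) (hMN : M ≤ N)
    (U : ℕ → ℝ → Matrix (Fin n) (Fin n) ℝ) (Ψ : ℝ → Fin n → ℝ)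
    (hUsmooth : ∀ k < N, SmoothMat (U k)) (hUblk : ∀ k < M, BlockDiag m (U k))
    (hΨ : SmoothVec Ψ)
    (a b : ℝ)
    (hYinv : ∀ s < N, ∀ x ∈ Set.Ioo a b, (chainM m M U s (U s) x).det ≠ 0)
    (hdet : ∀ x ∈ Set.Ioo a b, (Wmat m M N U x).det ≠ 0) :
    ∀ x ∈ Set.Ioo a b, ∀ j : Fin n,
      chainV m M U N Ψ x j =
        (WjMat m M N j U Ψ x).det / (Wmat m M N U x).det := by
  intro x hx j
  have hU : IsDarbouxChain m M N (Set.Ioo a b) U :=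
    { isOpen := isOpen_Ioo
      le := hMN
      smooth := fun k hk i j => (hUsmooth k hk i j).contDiffOn
      blockDiag := fun k hk x _ => hUblk k hk x
      det_ne_zero := hYinv }
  rw [eq_div_iff (hdet x hx)]
  exact chain_action_on_vector_general hU (fun i => (hΨ i).contDiffOn) hx j

end SingularDarboux
end
end

section
/- First-order singular matrix Darboux transformation: let 1 ≤ m < n, let V₀ = diag(V^{(I)}, V^{(II)}) be a smooth block-diagonal n×n real matrix-valued potential on an open interval with V^{(I)} of size m×m and V^{(II)} of size (n−m)×(n−m), let Λ̃ be a constant real m×m diagonal matrix, and let Ũ be a smooth m×m matrix-valued function with Ũ(x) invertible on the interval and satisfying −Ũ″ + V^{(I)}Ũ = ŨΛ̃. Set U = diag(Ũ, I_{n−m}) and L^{(m)} = D_m − (∂U)U⁻¹. If Ψ is a smooth n-vector-valued function satisfying −Ψ″ + V₀Ψ = EΨ for a real constant E, then Φ = L^{(m)}Ψ satisfies −Φ″ + V₁Φ = EΦ, where V₁ = diag(V^{(I)} − 2∂((∂Ũ)Ũ⁻¹), V^{(II)}). -/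
open Matrix

noncomputable section

namespace SingularDarboux

variable {n : ℕ}

/-!
Everything takes place in a normed algebra acting on a normed space. The superpotential `F = U'U⁻¹`
of a solution of `-U'' + VU = UΛ` satisfies the Riccati equation `F' + F² = V - S` with
`S = UΛU⁻¹`, and `S' = FS - SF`. If `-Ψ'' + VΨ = EΨ` and `Φ = Ψ' - FΨ`, then the Riccati equation
turns `Φ'` into `(S - E)Ψ - FΦ`, an expression free of `Ψ'` and `V`; differentiating it once more
gives `Φ'' = (S + F² - F' - E)Φ = (V - 2F' - E)Φ`.

The singular transformation is this one on the range of the projection `P` onto the first `m`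
coordinates and the identity on the range of `1 - P`: `PΨ` is a solution for the potential `PV`,
to which the above applies, and `(1 - P)Ψ` is still a solution after the change of potential
because `F'(1 - P) = 0`.
-/

section Schrodinger

variable {𝕜 A X : Type*} [NontriviallyNormedField 𝕜] [Ring A] [NormedAddCommGroup X]
  [NormedSpace 𝕜 X] [Module A X]

/-- `Ψ` solves the Schrödinger equation `-Ψ″ + VΨ = EΨ` on `s`, and `Ψ'` is its derivative there.
The values of the potential act linearly on those of `Ψ`. The derivative is a parameter, so that the
equation cannot hold through a junk value of `deriv`. -/
structure IsSchrodingerSolutionOn (V : 𝕜 → A) (E : 𝕜) (s : Set 𝕜) (Ψ Ψ' : 𝕜 → X) : Prop where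
  hasDerivAt : ∀ x ∈ s, HasDerivAt Ψ (Ψ' x) x
  hasDerivAt_deriv : ∀ x ∈ s, HasDerivAt Ψ' (V x • Ψ x - E • Ψ x) x

namespace IsSchrodingerSolutionOn

variable {V W : 𝕜 → A} {E : 𝕜} {s : Set 𝕜} {Ψ Ψ' Θ Θ' : 𝕜 → X}

theorem add (hΨ : IsSchrodingerSolutionOn V E s Ψ Ψ')
    (hΘ : IsSchrodingerSolutionOn V E s Θ Θ') :
    IsSchrodingerSolutionOn V E s (fun x => Ψ x + Θ x) fun x => Ψ' x + Θ' x where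
  hasDerivAt x hx := (hΨ.hasDerivAt x hx).add (hΘ.hasDerivAt x hx)
  hasDerivAt_deriv x hx := by
    convert (hΨ.hasDerivAt_deriv x hx).fun_add (hΘ.hasDerivAt_deriv x hx) using 1
    rw [smul_add, smul_add]
    abel

theorem congr_potential (hΨ : IsSchrodingerSolutionOn V E s Ψ Ψ')
    (h : ∀ x ∈ s, V x • Ψ x = W x • Ψ x) : IsSchrodingerSolutionOn W E s Ψ Ψ' where
  hasDerivAt := hΨ.hasDerivAt
  hasDerivAt_deriv x hx := h x hx ▸ hΨ.hasDerivAt_deriv x hx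

theorem congr (hs : IsOpen s) (hΨ : IsSchrodingerSolutionOn V E s Ψ Ψ') (h : Set.EqOn Θ Ψ s) :
    IsSchrodingerSolutionOn V E s Θ Ψ' where
  hasDerivAt x hx :=
    (hΨ.hasDerivAt x hx).congr_of_eventuallyEq (h.eventuallyEq_of_mem (hs.mem_nhds hx))
  hasDerivAt_deriv x hx := h hx ▸ hΨ.hasDerivAt_deriv x hx

end IsSchrodingerSolutionOn

end Schrodinger

open scoped Ring

theorem commute_ringInverse_right {M : Type*} [MonoidWithZero M] {a b : M} (h : Commute a b)
    (hb : IsUnit b) : Commute a b⁻¹ʳ := by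
  obtain ⟨u, rfl⟩ := hb
  simpa using h.units_inv_right

/-- The superpotential `F = U'U⁻¹` of a Darboux transformation `Ψ ↦ Ψ' - FΨ`; the parameter `U'`
stands for the derivative of `U`. -/
def superpotential {T M : Type*} [MonoidWithZero M] (U U' : T → M) (x : T) : M := U' x * (U x)⁻¹ʳ

section NormedAlgebra

variable {𝕜 A X : Type*} [NontriviallyNormedField 𝕜] [NormedRing A] [NormedAlgebra 𝕜 A]
  [NormedAddCommGroup X] [NormedSpace 𝕜 X] [Module A X] [IsScalarTower 𝕜 A X] [IsBoundedSMul A X]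
  {V : 𝕜 → A} {P : A} {E : 𝕜} {s : Set 𝕜} {Ψ Ψ' : 𝕜 → X}

namespace IsSchrodingerSolutionOn

variable {F F' S : 𝕜 → A}

theorem const_smul (hΨ : IsSchrodingerSolutionOn V E s Ψ Ψ') (hPV : ∀ x ∈ s, Commute P (V x)) :
    IsSchrodingerSolutionOn V E s (fun x => P • Ψ x) fun x => P • Ψ' x where
  hasDerivAt x hx := (hΨ.hasDerivAt x hx).fun_const_smul P
  hasDerivAt_deriv x hx := by
    convert (hΨ.hasDerivAt_deriv x hx).fun_const_smul P using 1
    rw [smul_sub, smul_smul, smul_smul, (hPV x hx).eq, smul_algebra_smul_comm]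

theorem darboux (hΨ : IsSchrodingerSolutionOn V E s Ψ Ψ')
    (hF : ∀ x ∈ s, HasDerivAt F (F' x) x)
    (hRiccati : ∀ x ∈ s, F' x = V x - S x - F x * F x)
    (hS : ∀ x ∈ s, HasDerivAt S (F x * S x - S x * F x) x) :
    IsSchrodingerSolutionOn (fun x => V x - (2 : 𝕜) • F' x) E s (fun x => Ψ' x - F x • Ψ x)
      fun x => S x • Ψ x - E • Ψ x - F x • (Ψ' x - F x • Ψ x) := by
  have hΦ : ∀ x ∈ s, HasDerivAt (fun t => Ψ' t - F t • Ψ t)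
      (S x • Ψ x - E • Ψ x - F x • (Ψ' x - F x • Ψ x)) x := fun x hx => by
    convert (hΨ.hasDerivAt_deriv x hx).fun_sub ((hF x hx).fun_smul (hΨ.hasDerivAt x hx)) using 1
    rw [hRiccati x hx]
    simp only [sub_smul, smul_sub, mul_smul]
    abel
  refine ⟨hΦ, fun x hx => ?_⟩
  convert (((hS x hx).fun_smul (hΨ.hasDerivAt x hx)).fun_sub
    ((hΨ.hasDerivAt x hx).fun_const_smul E)).fun_sub ((hF x hx).fun_smul (hΦ x hx)) using 1
  have hV : V x = F' x + S x + F x * F x := by rw [hRiccati x hx]; abel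
  rw [hV]
  simp only [sub_smul, add_smul, smul_sub, mul_smul, two_smul, smul_algebra_smul_comm]
  abel

theorem darboux_projection (hs : IsOpen s) (hΨ : IsSchrodingerSolutionOn V E s Ψ Ψ')
    (hP : IsIdempotentElem P) (hPV : ∀ x ∈ s, Commute P (V x))
    (hF : ∀ x ∈ s, HasDerivAt F (F' x) x)
    (hRiccati : ∀ x ∈ s, F' x = P * V x - S x - F x * F x)
    (hS : ∀ x ∈ s, HasDerivAt S (F x * S x - S x * F x) x)
    (hPF : ∀ x ∈ s, P * F x = F x) (hFP : ∀ x ∈ s, F x * P = F x)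
    (hSP : ∀ x ∈ s, S x * P = S x) :
    ∃ Φ', IsSchrodingerSolutionOn (fun x => V x - (2 : 𝕜) • F' x) E s
      (fun x => P • Ψ' x + (1 - P) • Ψ x - F x • Ψ x) Φ' := by
  have hF'P : ∀ x ∈ s, F' x * P = F' x := fun x hx => by
    rw [hRiccati x hx, sub_mul, sub_mul, (hPV x hx).eq, mul_assoc (V x), hP.eq, hSP x hx,
      mul_assoc (F x), hFP x hx]
  have hRange : IsSchrodingerSolutionOn (fun x => P * V x) E s (fun x => P • Ψ x)
      fun x => P • Ψ' x :=
    (hΨ.const_smul hPV).congr_potential fun x hx => by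
      rw [(hPV x hx).eq, mul_smul, smul_smul P P, hP.eq]
  have hRangeDarboux : IsSchrodingerSolutionOn (fun x => V x - (2 : 𝕜) • F' x) E s
      (fun x => P • Ψ' x - F x • P • Ψ x) _ :=
    (hRange.darboux hF hRiccati hS).congr_potential fun x hx => by
      have hPΦ : P • (P • Ψ' x - F x • P • Ψ x) = P • Ψ' x - F x • P • Ψ x := by
        rw [smul_sub, smul_smul, hP.eq, smul_smul P, hPF x hx]
      rw [sub_smul, sub_smul, (hPV x hx).eq, mul_smul, hPΦ]
  have hKer : IsSchrodingerSolutionOn (fun x => V x - (2 : 𝕜) • F' x) E s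
      (fun x => (1 - P) • Ψ x) fun x => (1 - P) • Ψ' x :=
    (hΨ.const_smul fun x hx => (Commute.one_left _).sub_left (hPV x hx)).congr_potential
      fun x hx => by
        rw [sub_smul (V x), smul_assoc, smul_smul (F' x), mul_sub, mul_one, hF'P x hx, sub_self,
          zero_smul, smul_zero, sub_zero]
  refine ⟨_, (hRangeDarboux.add hKer).congr hs fun x hx => ?_⟩
  simp only [smul_smul (F x), hFP x hx]
  abel

end IsSchrodingerSolutionOn

section Superpotential

variable [HasSummableGeomSeries A] {U U' : 𝕜 → A} {x : 𝕜}

theorem hasDerivAt_ringInverse_comp {u' : A} (hU : HasDerivAt U u' x) (hx : IsUnit (U x)) :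
    HasDerivAt (fun t => (U t)⁻¹ʳ) (-((U x)⁻¹ʳ * u' * (U x)⁻¹ʳ)) x := by
  obtain ⟨u, hu⟩ := hx
  have hinv := hasFDerivAt_ringInverse (𝕜 := 𝕜) u
  rw [hu] at hinv
  simpa [← hu] using! hinv.comp_hasDerivAt x hU

theorem hasDerivAt_superpotential {U'' : A} (hU : HasDerivAt U (U' x) x)
    (hU' : HasDerivAt U' U'' x) (hx : IsUnit (U x)) :
    HasDerivAt (superpotential U U')
      (U'' * (U x)⁻¹ʳ - superpotential U U' x * superpotential U U' x) x :=
  (hU'.fun_mul (hasDerivAt_ringInverse_comp hU hx)).congr_deriv (by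
    simp only [superpotential, mul_neg, sub_eq_add_neg, mul_assoc])

theorem hasDerivAt_mul_mul_ringInverse (C : A) (hU : HasDerivAt U (U' x) x)
    (hx : IsUnit (U x)) :
    HasDerivAt (fun t => U t * C * (U t)⁻¹ʳ)
      (superpotential U U' x * (U x * C * (U x)⁻¹ʳ)
        - U x * C * (U x)⁻¹ʳ * superpotential U U' x) x :=
  ((hU.mul_const C).fun_mul (hasDerivAt_ringInverse_comp hU hx)).congr_deriv (by
    simp only [superpotential, mul_neg, sub_eq_add_neg, mul_assoc,
      Ring.inverse_mul_cancel_left _ _ hx])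

end Superpotential

theorem IsSchrodingerSolutionOn.singularDarboux [HasSummableGeomSeries A] {U U' : 𝕜 → A} {Λ : A}
    (hs : IsOpen s) (hΨ : IsSchrodingerSolutionOn V E s Ψ Ψ')
    (hP : IsIdempotentElem P) (hPV : ∀ x ∈ s, Commute P (V x))
    (hPU : ∀ x ∈ s, Commute P (U x)) (hUinv : ∀ x ∈ s, IsUnit (U x))
    (hPU' : ∀ x ∈ s, P * U' x = U' x) (hU'P : ∀ x ∈ s, U' x * P = U' x)
    (hU : ∀ x ∈ s, HasDerivAt U (U' x) x)
    (hUeq : ∀ x ∈ s, HasDerivAt U' (P * (V x * U x - U x * Λ) * P) x) :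
    ∃ Φ', IsSchrodingerSolutionOn (fun x => V x - (2 : 𝕜) • deriv (superpotential U U') x) E s
      (fun x => P • Ψ' x + (1 - P) • Ψ x - superpotential U U' x • Ψ x) Φ' := by
  have hPinv : ∀ x ∈ s, Commute P (U x)⁻¹ʳ := fun x hx =>
    commute_ringInverse_right (hPU x hx) (hUinv x hx)
  have hF := fun x hx => hasDerivAt_superpotential (hU x hx) (hUeq x hx) (hUinv x hx)
  refine hΨ.darboux_projection (S := fun x => U x * (P * Λ * P) * (U x)⁻¹ʳ) hs hP hPV
    (fun x hx => (hF x hx).differentiableAt.hasDerivAt) (fun x hx => ?_)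
    (fun x hx => hasDerivAt_mul_mul_ringInverse _ (hU x hx) (hUinv x hx))
    (fun x hx => ?_) (fun x hx => ?_) (fun x hx => ?_)
  · have hU'' : P * (V x * U x - U x * Λ) * P = P * V x * U x - U x * (P * Λ * P) := by
      calc P * (V x * U x - U x * Λ) * P
          = P * V x * (U x * P) - P * U x * Λ * P := by noncomm_ring
        _ = P * V x * (P * U x) - U x * P * Λ * P := by rw [(hPU x hx).eq]
        _ = P * V x * P * U x - U x * (P * Λ * P) := by noncomm_ring
        _ = P * V x * U x - U x * (P * Λ * P) := by
          rw [mul_assoc P (V x) P, ← (hPV x hx).eq, hP.mul_self_mul]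
    rw [(hF x hx).deriv, hU'', sub_mul, Ring.mul_inverse_cancel_right _ _ (hUinv x hx)]
  · rw [superpotential, ← mul_assoc, hPU' x hx]
  · rw [superpotential, mul_assoc, ← (hPinv x hx).eq, ← mul_assoc, hU'P x hx]
  · simp only [mul_assoc, ← (hPinv x hx).eq, hP.mul_self_mul]

end NormedAlgebra

section Matrix

variable {R : Type*} [Semiring R] {m : ℕ} {s : Set ℝ} {x : ℝ}

/-- The projection of `Rⁿ` onto the first `m` coordinates. -/
def blockProj (R : Type*) [Semiring R] (n m : ℕ) : Matrix (Fin n) (Fin n) R :=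
  Matrix.diagonal fun i => if (i : ℕ) < m then 1 else 0

theorem blockProj_mul_apply (A : Matrix (Fin n) (Fin n) R) (i j : Fin n) :
    (blockProj R n m * A) i j = if (i : ℕ) < m then A i j else 0 := by
  simp [blockProj, Matrix.diagonal_mul]

theorem mul_blockProj_apply (A : Matrix (Fin n) (Fin n) R) (i j : Fin n) :
    (A * blockProj R n m) i j = if (j : ℕ) < m then A i j else 0 := by
  simp [blockProj, Matrix.mul_diagonal]

theorem isIdempotentElem_blockProj : IsIdempotentElem (blockProj R n m) := by
  rw [IsIdempotentElem, blockProj, Matrix.diagonal_mul_diagonal]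
  congr! 2 with i
  split_ifs <;> simp

theorem commute_blockProj {A : Matrix (Fin n) (Fin n) R}
    (hA : ∀ i j : Fin n, ((i : ℕ) < m ∧ m ≤ (j : ℕ)) ∨ (m ≤ (i : ℕ) ∧ (j : ℕ) < m) → A i j = 0) :
    Commute (blockProj R n m) A := by
  ext i j
  rw [blockProj_mul_apply, mul_blockProj_apply]
  split_ifs with hi hj hj
  · rfl
  · exact hA i j (by omega)
  · exact (hA i j (by omega)).symm
  · rfl

theorem blockProj_mul_eq_self {A : Matrix (Fin n) (Fin n) R}
    (hA : ∀ i j : Fin n, m ≤ (i : ℕ) → A i j = 0) : blockProj R n m * A = A := by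
  ext i j
  rw [blockProj_mul_apply, ite_eq_left_iff]
  exact fun hi => (hA i j (not_lt.1 hi)).symm

theorem mul_blockProj_eq_self {A : Matrix (Fin n) (Fin n) R}
    (hA : ∀ i j : Fin n, m ≤ (j : ℕ) → A i j = 0) : A * blockProj R n m = A := by
  ext i j
  rw [mul_blockProj_apply, ite_eq_left_iff]
  exact fun hj => (hA i j (not_lt.1 hj)).symm

theorem vecDm_eq (Ψ : ℝ → Fin n → ℝ) (x : ℝ) :
    vecDm m Ψ x = blockProj ℝ n m *ᵥ vecD Ψ x + (1 - blockProj ℝ n m) *ᵥ Ψ x := by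
  ext i
  simp only [vecDm, vecD, blockProj, Matrix.sub_mulVec, Matrix.one_mulVec, Pi.add_apply,
    Pi.sub_apply, Matrix.mulVec_diagonal]
  split_ifs <;> ring

namespace BlockDiag

variable {U : ℝ → Matrix (Fin n) (Fin n) ℝ} {i j : Fin n}

theorem matD_apply_eq_zero (hU : BlockDiag m U) (x : ℝ) (hij : m ≤ (i : ℕ) ∨ m ≤ (j : ℕ)) :
    matD U x i j = 0 := by
  simp [matD, funext fun t => hU t i j hij]

theorem matD_matD_apply_eq_zero (hU : BlockDiag m U) (x : ℝ)
    (hij : m ≤ (i : ℕ) ∨ m ≤ (j : ℕ)) : matD (matD U) x i j = 0 := by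
  rw [matD, Matrix.of_apply, funext fun t => hU.matD_apply_eq_zero t hij, deriv_const]

theorem commute_blockProj (hU : BlockDiag m U) (x : ℝ) : Commute (blockProj ℝ n m) (U x) :=
  SingularDarboux.commute_blockProj fun i j hij => by
    rw [hU x i j (by omega), if_neg (by rintro rfl; omega)]

theorem matD_matD_eq {V Λ : Matrix (Fin n) (Fin n) ℝ} (hU : BlockDiag m U)
    (hUeq : ∀ i j : Fin n, (i : ℕ) < m → (j : ℕ) < m →
      (-matD (matD U) x + V * U x) i j = (U x * Λ) i j) :
    matD (matD U) x = blockProj ℝ n m * (V * U x - U x * Λ) * blockProj ℝ n m := by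
  ext i j
  rw [mul_blockProj_apply, blockProj_mul_apply]
  split_ifs with hj hi
  · have := hUeq i j hi hj
    rw [Matrix.add_apply, Matrix.neg_apply] at this
    rw [Matrix.sub_apply]
    linarith
  · exact hU.matD_matD_apply_eq_zero x (.inl (not_lt.1 hi))
  · exact hU.matD_matD_apply_eq_zero x (.inr (not_lt.1 hj))

end BlockDiag

theorem hasDerivAt_vecD {Ψ : ℝ → Fin n → ℝ} (hΨ : ∀ i, DifferentiableAt ℝ (fun t => Ψ t i) x) :
    HasDerivAt Ψ (vecD Ψ x) x :=
  hasDerivAt_pi.2 fun i => (hΨ i).hasDerivAt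

theorem vecD_eq_deriv {Ψ : ℝ → Fin n → ℝ} (hΨ : DifferentiableAt ℝ Ψ x) :
    vecD Ψ x = deriv Ψ x :=
  (deriv_pi (differentiableAt_pi.1 hΨ)).symm

theorem isSchrodingerSolutionOn_vecD {V : ℝ → Matrix (Fin n) (Fin n) ℝ} {E : ℝ}
    {Ψ : ℝ → Fin n → ℝ} (hs : IsOpen s) (hΨ : ∀ i, DifferentiableOn ℝ (fun x => Ψ x i) s)
    (hΨ' : ∀ i, DifferentiableOn ℝ (fun x => vecD Ψ x i) s)
    (hΨeq : ∀ x ∈ s, -vecD (vecD Ψ) x + V x *ᵥ Ψ x = E • Ψ x) :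
    IsSchrodingerSolutionOn V E s Ψ (vecD Ψ) where
  hasDerivAt x hx := hasDerivAt_vecD fun i => (hΨ i).differentiableAt (hs.mem_nhds hx)
  hasDerivAt_deriv x hx := by
    have hΨ'' : vecD (vecD Ψ) x = V x • Ψ x - E • Ψ x := by
      rw [← hΨeq x hx, Matrix.smul_eq_mulVec]
      abel
    exact hΨ'' ▸ hasDerivAt_vecD fun i => (hΨ' i).differentiableAt (hs.mem_nhds hx)

theorem IsSchrodingerSolutionOn.neg_vecD_vecD_add {V : ℝ → Matrix (Fin n) (Fin n) ℝ} {E : ℝ}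
    {Ψ Ψ' : ℝ → Fin n → ℝ} (hs : IsOpen s) (hΨ : IsSchrodingerSolutionOn V E s Ψ Ψ')
    (hx : x ∈ s) : -vecD (vecD Ψ) x + V x *ᵥ Ψ x = E • Ψ x := by
  have hvecD : Set.EqOn (vecD Ψ) Ψ' s := fun t ht => by
    rw [vecD_eq_deriv (hΨ.hasDerivAt t ht).differentiableAt, (hΨ.hasDerivAt t ht).deriv]
  have hΨ'' := (hΨ.hasDerivAt_deriv x hx).congr_of_eventuallyEq
    (hvecD.eventuallyEq_of_mem (hs.mem_nhds hx))
  rw [vecD_eq_deriv hΨ''.differentiableAt, hΨ''.deriv, Matrix.smul_eq_mulVec]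
  abel

section OperatorNorm

open scoped Matrix.Norms.Operator

theorem hasDerivAt_matD {U : ℝ → Matrix (Fin n) (Fin n) ℝ}
    (hU : ∀ i j, DifferentiableAt ℝ (fun t => U t i j) x) : HasDerivAt U (matD U x) x :=
  hasDerivAt_pi.2 fun i => hasDerivAt_pi.2 fun j => (hU i j).hasDerivAt

theorem matD_eq_deriv {U : ℝ → Matrix (Fin n) (Fin n) ℝ} (hU : DifferentiableAt ℝ U x) :
    matD U x = deriv U x := by
  ext i j
  exact (hasDerivAt_pi.1 (hasDerivAt_pi.1 hU.hasDerivAt i) j).deriv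

theorem isBoundedSMul_mulVec : IsBoundedSMul (Matrix (Fin n) (Fin n) ℝ) (Fin n → ℝ) :=
  .of_norm_smul_le Matrix.linfty_opNorm_mulVec

theorem IsSchrodingerSolutionOn.singularDarboux_blockDiag
    {V U : ℝ → Matrix (Fin n) (Fin n) ℝ} {Λ : Matrix (Fin n) (Fin n) ℝ} {E : ℝ}
    {Ψ : ℝ → Fin n → ℝ} (hs : IsOpen s) (hΨ : IsSchrodingerSolutionOn V E s Ψ (vecD Ψ))
    (hVblk : ∀ x ∈ s, ∀ i j : Fin n,
      ((i : ℕ) < m ∧ m ≤ (j : ℕ)) ∨ (m ≤ (i : ℕ) ∧ (j : ℕ) < m) → V x i j = 0)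
    (hU : ∀ i j, DifferentiableOn ℝ (fun x => U x i j) s)
    (hU' : ∀ i j, DifferentiableOn ℝ (fun x => matD U x i j) s)
    (hUblk : BlockDiag m U) (hUinv : ∀ x ∈ s, IsUnit (U x))
    (hUeq : ∀ x ∈ s, ∀ i j : Fin n, (i : ℕ) < m → (j : ℕ) < m →
      (-matD (matD U) x + V x * U x) i j = (U x * Λ) i j) :
    ∃ Φ', IsSchrodingerSolutionOn
      (fun x => V x - (2 : ℝ) • matD (fun t => matD U t * (U t)⁻¹) x) E s
      (fun x => vecDm m Ψ x - (matD U x * (U x)⁻¹) *ᵥ Ψ x) Φ' := by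
  have := isBoundedSMul_mulVec (n := n)
  have hU₁ : ∀ x ∈ s, HasDerivAt U (matD U x) x := fun x hx =>
    hasDerivAt_matD fun i j => (hU i j).differentiableAt (hs.mem_nhds hx)
  have hU₂ : ∀ x ∈ s, HasDerivAt (matD U) (matD (matD U) x) x := fun x hx =>
    hasDerivAt_matD fun i j => (hU' i j).differentiableAt (hs.mem_nhds hx)
  have hF : (fun t => matD U t * (U t)⁻¹) = superpotential U (matD U) :=
    funext fun t => by rw [superpotential, Matrix.nonsing_inv_eq_ringInverse]
  obtain ⟨Φ', hΦ⟩ := hΨ.singularDarboux (U' := matD U) hs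
    isIdempotentElem_blockProj (fun x hx => commute_blockProj (hVblk x hx))
    (fun x _ => hUblk.commute_blockProj x) hUinv
    (fun x _ => blockProj_mul_eq_self fun i j hi => hUblk.matD_apply_eq_zero x (.inl hi))
    (fun x _ => mul_blockProj_eq_self fun i j hj => hUblk.matD_apply_eq_zero x (.inr hj))
    hU₁ (fun x hx => hUblk.matD_matD_eq (hUeq x hx) ▸ hU₂ x hx)
  refine ⟨Φ', (hΦ.congr hs fun x _ => ?_).congr_potential fun x hx => ?_⟩
  · simp only [vecDm_eq, congrFun hF x, Matrix.smul_eq_mulVec]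
  · rw [hF, matD_eq_deriv
      (hasDerivAt_superpotential (hU₁ x hx) (hU₂ x hx) (hUinv x hx)).differentiableAt]
    -- The ring operations come from the normed ring on one side and from `Matrix` on the other.
    rfl

end OperatorNorm

end Matrix

theorem differentiableOn_deriv_of_contDiffOn {𝕜 F : Type*} [NontriviallyNormedField 𝕜]
    [NormedAddCommGroup F] [NormedSpace 𝕜 F] {f : 𝕜 → F} {s : Set 𝕜} (hs : IsOpen s)
    (hf : ContDiffOn 𝕜 2 f s) : DifferentiableOn 𝕜 (deriv f) s :=
  (hf.deriv_of_isOpen hs (m := 1) (by norm_num)).differentiableOn one_ne_zero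

theorem singular_darboux_transformation_general {n m : ℕ} {s : Set ℝ} (hs : IsOpen s)
    {V0 : ℝ → Matrix (Fin n) (Fin n) ℝ}
    (hV0blk : ∀ x ∈ s, ∀ i j : Fin n,
      ((i : ℕ) < m ∧ m ≤ (j : ℕ)) ∨ (m ≤ (i : ℕ) ∧ (j : ℕ) < m) → V0 x i j = 0)
    {Λ : Matrix (Fin n) (Fin n) ℝ} {U : ℝ → Matrix (Fin n) (Fin n) ℝ}
    (hU : ∀ i j, DifferentiableOn ℝ (fun x => U x i j) s)
    (hU' : ∀ i j, DifferentiableOn ℝ (fun x => matD U x i j) s)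
    (hUblk : BlockDiag m U) (hUinv : ∀ x ∈ s, IsUnit (U x))
    (hUeq : ∀ x ∈ s, ∀ i j : Fin n, (i : ℕ) < m → (j : ℕ) < m →
      (-matD (matD U) x + V0 x * U x) i j = (U x * Λ) i j)
    {V1 : ℝ → Matrix (Fin n) (Fin n) ℝ}
    (hV1 : ∀ x ∈ s, V1 x = V0 x - (2 : ℝ) • matD (fun t => matD U t * (U t)⁻¹) x)
    {E : ℝ} {Ψ : ℝ → Fin n → ℝ}
    (hΨ : ∀ i, DifferentiableOn ℝ (fun x => Ψ x i) s)
    (hΨ' : ∀ i, DifferentiableOn ℝ (fun x => vecD Ψ x i) s)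
    (hΨeq : ∀ x ∈ s, -vecD (vecD Ψ) x + V0 x *ᵥ Ψ x = E • Ψ x)
    {Φ : ℝ → Fin n → ℝ}
    (hΦ : ∀ x ∈ s, Φ x = vecDm m Ψ x - (matD U x * (U x)⁻¹) *ᵥ Ψ x) :
    ∀ x ∈ s, -vecD (vecD Φ) x + V1 x *ᵥ Φ x = E • Φ x := by
  intro x hx
  obtain ⟨Φ', hsol⟩ := (isSchrodingerSolutionOn_vecD hs hΨ hΨ' hΨeq).singularDarboux_blockDiag
    hs hV0blk hU hU' hUblk hUinv hUeq
  rw [hV1 x hx]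
  exact (hsol.congr hs hΦ).neg_vecD_vecD_add hs hx

/-- First-order singular matrix Darboux transformation: for a block-diagonal
potential `V₀ = diag(V^{(I)}, V^{(II)})` and transformation matrix
`U = diag(Ũ, I_{n-m})` with `-Ũ'' + V^{(I)}Ũ = ŨΛ̃`, the function
`Φ = D_mΨ - (∂U)U⁻¹Ψ` solves `-Φ'' + V₁Φ = EΦ`, where
`V₁ = V₀ - 2∂((∂U)U⁻¹) = diag(V^{(I)} - 2∂((∂Ũ)Ũ⁻¹), V^{(II)})`. -/
theorem singular_darboux_transformation {n : ℕ} (m : ℕ) (hm : 1 ≤ m) (hmn : m < n)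
    (a b : ℝ)
    (V0 : ℝ → Matrix (Fin n) (Fin n) ℝ)
    (hV0smooth : ∀ i j, ContDiffOn ℝ (⊤ : ℕ∞) (fun x => V0 x i j) (Set.Ioo a b))
    (hV0blk : ∀ (x : ℝ) (i j : Fin n),
      (((i : ℕ) < m ∧ m ≤ (j : ℕ)) ∨ (m ≤ (i : ℕ) ∧ (j : ℕ) < m)) → V0 x i j = 0)
    (Λ : Matrix (Fin n) (Fin n) ℝ) (hΛ : Λ.IsDiag)
    (U : ℝ → Matrix (Fin n) (Fin n) ℝ)
    (hUsmooth : ∀ i j, ContDiffOn ℝ (⊤ : ℕ∞) (fun x => U x i j) (Set.Ioo a b))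
    (hUblk : BlockDiag m U)
    (hUinv : ∀ x ∈ Set.Ioo a b, IsUnit (U x))
    (hUeq : ∀ x ∈ Set.Ioo a b, ∀ i j : Fin n, (i : ℕ) < m → (j : ℕ) < m →
      (-matD (matD U) x + V0 x * U x) i j = (U x * Λ) i j)
    (V1 : ℝ → Matrix (Fin n) (Fin n) ℝ)
    (hV1 : ∀ x, V1 x = V0 x - (2 : ℝ) • matD (fun t => matD U t * (U t)⁻¹) x)
    (E : ℝ) (Ψ : ℝ → Fin n → ℝ)
    (hΨsmooth : ∀ i, ContDiffOn ℝ (⊤ : ℕ∞) (fun x => Ψ x i) (Set.Ioo a b))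
    (hΨeq : ∀ x ∈ Set.Ioo a b, -vecD (vecD Ψ) x + (V0 x).mulVec (Ψ x) = E • Ψ x)
    (Φ : ℝ → Fin n → ℝ)
    (hΦ : ∀ x, Φ x = vecDm m Ψ x - (matD U x * (U x)⁻¹).mulVec (Ψ x)) :
    ∀ x ∈ Set.Ioo a b, -vecD (vecD Φ) x + (V1 x).mulVec (Φ x) = E • Φ x :=
  singular_darboux_transformation_general isOpen_Ioo (fun x _ => hV0blk x)
    (fun i j => (hUsmooth i j).differentiableOn (by simp))
    (fun i j => differentiableOn_deriv_of_contDiffOn isOpen_Ioo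
      (contDiffOn_infty.1 (hUsmooth i j) 2))
    hUblk hUinv hUeq (fun x _ => hV1 x) (fun i => (hΨsmooth i).differentiableOn (by simp))
    (fun i => differentiableOn_deriv_of_contDiffOn isOpen_Ioo
      (contDiffOn_infty.1 (hΨsmooth i) 2))
    hΨeq fun x _ => hΦ x

end SingularDarboux
end
end
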